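/- arXiv:1507.02901 — 3 statements merged into one kernel-verified Lean document; each statement's English description precedes it below -/
import Mathlib

section
/- Let N be a normal bounded operator on a nonzero complex Hilbert space E and T a pure quasinormal bounded operator on a nonzero complex Hilbert space H, such that R = N⊕T on E⊕H is injective. Suppose NONE of the following holds: (a) m_{|N|} < m_{|T|}, m_{|N|} is an eigenvalue of |N| and ‖T‖ is an eigenvalue of |T|; (b) m_{|N|} = m_{|T|} and either (m_{|N|} is an eigenvalue of |N| and ‖T‖ is an eigenvalue of |T|) or (m_{|T|} is an eigenvalue of |T| and ‖T‖ is an eigenvalue of |T|); (c) m_{|N|} > m_{|T|}, m_{|T|} is an eigenvalue of |T| and ‖T‖ is an eigenvalue of |T|. Then σ_ext(N⊕T) = σ_ext(N) ∪ {λ ∈ ℂ : |λ| > min(m_{|N|}, m_{|T|})/‖T‖}. -/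
open ContinuousLinearMap

noncomputable section

/-- The modulus `|T| = (T*T)^(1/2)` of a bounded operator on a complex Hilbert space. -/
def modulus {H : Type*} [NormedAddCommGroup H] [InnerProductSpace ℂ H] [CompleteSpace H]
    (T : H →L[ℂ] H) : H →L[ℂ] H :=
  CFC.sqrt (adjoint T ∘L T)

/-- A bounded operator is quasinormal if it commutes with its modulus. -/
def IsQuasinormal {H : Type*} [NormedAddCommGroup H] [InnerProductSpace ℂ H] [CompleteSpace H]
    (T : H →L[ℂ] H) : Prop :=
  T ∘L modulus T = modulus T ∘L T

/-- `m_T = inf {⟨Tx,x⟩ : ‖x‖ = 1}` (real part of the inner product). -/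
def mval {H : Type*} [NormedAddCommGroup H] [InnerProductSpace ℂ H]
    (T : H →L[ℂ] H) : ℝ :=
  sInf {r : ℝ | ∃ x : H, ‖x‖ = 1 ∧ r = T.reApplyInnerSelf x}

/-- The set of intertwining values `Λ_int(R,M)`. -/
def intertwiningValues {H K : Type*} [NormedAddCommGroup H] [InnerProductSpace ℂ H]
    [NormedAddCommGroup K] [InnerProductSpace ℂ K]
    (R : H →L[ℂ] H) (M : K →L[ℂ] K) : Set ℂ :=
  {l : ℂ | ∃ X : K →L[ℂ] H, X ≠ 0 ∧ R ∘L X = l • (X ∘L M)}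

/-- The set of extended eigenvalues `σ_ext(T)`. -/
def extSpectrum {H : Type*} [NormedAddCommGroup H] [InnerProductSpace ℂ H]
    (T : H →L[ℂ] H) : Set ℂ :=
  {l : ℂ | ∃ X : H →L[ℂ] H, X ≠ 0 ∧ T ∘L X = l • (X ∘L T)}

/-- The set `𝒜_r(R,A)` of operators `L` with `‖Rⁿ(Lx)‖ ≤ c·rⁿ·‖Aⁿx‖` for all `n, x`. -/
def calA {H 𝔏 : Type*} [NormedAddCommGroup H] [InnerProductSpace ℂ H]
    [NormedAddCommGroup 𝔏] [InnerProductSpace ℂ 𝔏]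
    (r : ℝ) (R : H →L[ℂ] H) (A : 𝔏 →L[ℂ] 𝔏) : Set (𝔏 →L[ℂ] H) :=
  {L : 𝔏 →L[ℂ] H | ∃ c : ℝ, 0 ≤ c ∧
    ∀ (n : ℕ) (x : 𝔏), ‖(R ^ n) (L x)‖ ≤ c * r ^ n * ‖(A ^ n) x‖}

/-- An operator is pure if it has no nonzero reducing subspace on which it is normal. -/
def IsPure {H : Type*} [NormedAddCommGroup H] [InnerProductSpace ℂ H] [CompleteSpace H]
    (T : H →L[ℂ] H) : Prop :=
  ∀ M : Submodule ℂ H, IsClosed (M : Set H) → (∀ x ∈ M, T x ∈ M) →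
    (∀ x ∈ M, adjoint T x ∈ M) →
    (∀ x ∈ M, T (adjoint T x) = adjoint T (T x)) → M = ⊥

universe u

/-- An operator is subnormal if it has a normal extension on a larger Hilbert space. -/
def IsSubnormal {F : Type*} [NormedAddCommGroup F] [InnerProductSpace ℂ F] [CompleteSpace F]
    (T : F →L[ℂ] F) : Prop :=
  ∃ (K : Type u) (_ : NormedAddCommGroup K) (_ : InnerProductSpace ℂ K) (_ : CompleteSpace K)
    (j : F →ₗᵢ[ℂ] K) (M : K →L[ℂ] K),
      adjoint M ∘L M = M ∘L adjoint M ∧ ∀ x : F, M (j x) = j (T x)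

end

section helpers
open ContinuousLinearMap Filter Topology

variable {H : Type*} [NormedAddCommGroup H] [InnerProductSpace ℂ H] [CompleteSpace H]
variable {G : Type*} [NormedAddCommGroup G] [InnerProductSpace ℂ G] [CompleteSpace G]

lemma mulap (A B : H →L[ℂ] H) (x : H) : (A * B) x = A (B x) := rfl

lemma modulus_nonneg' (T : H →L[ℂ] H) : 0 ≤ modulus T := CFC.sqrt_nonneg _

lemma modulus_mul_self (T : H →L[ℂ] H) : modulus T * modulus T = adjoint T * T := by
  have h : 0 ≤ adjoint T ∘L T := star_mul_self_nonneg T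
  exact CFC.sqrt_mul_sqrt_self _ h

lemma modulus_sa (T : H →L[ℂ] H) : IsSelfAdjoint (modulus T) :=
  IsSelfAdjoint.of_nonneg (modulus_nonneg' T)

lemma modulus_symm (T : H →L[ℂ] H) (x y : H) :
    inner ℂ (modulus T x) y = inner ℂ x (modulus T y) := by
  have := ((nonneg_iff_isPositive _).1 (modulus_nonneg' T)).1 x y
  simpa using this

lemma norm_sq_eq (T : H →L[ℂ] H) (x : H) : ‖T x‖ ^ 2 = RCLike.re (inner ℂ ((adjoint T * T) x) x) := by
  rw [mulap, adjoint_inner_left, inner_self_eq_norm_sq]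

lemma norm_modulus_apply (T : H →L[ℂ] H) (x : H) : ‖modulus T x‖ = ‖T x‖ := by
  have h : ‖modulus T x‖ ^ 2 = ‖T x‖ ^ 2 := by
    rw [norm_sq_eq T, ← modulus_mul_self, mulap, modulus_symm, inner_self_eq_norm_sq]
  exact (sq_eq_sq₀ (norm_nonneg _) (norm_nonneg _)).1 h

lemma norm_modulus (T : H →L[ℂ] H) : ‖modulus T‖ = ‖T‖ := by
  apply le_antisymm
  · refine opNorm_le_bound _ (norm_nonneg _) fun x => ?_
    rw [norm_modulus_apply]; exact T.le_opNorm x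
  · refine opNorm_le_bound _ (norm_nonneg _) fun x => ?_
    rw [← norm_modulus_apply]; exact le_opNorm _ x

lemma qn_commute {T : H →L[ℂ] H} (h : IsQuasinormal T) : Commute (modulus T) T := h.symm

lemma qn_commute_adj {T : H →L[ℂ] H} (h : IsQuasinormal T) : Commute (modulus T) (adjoint T) := by
  have := (qn_commute h).star_star
  rwa [(modulus_sa T).star_eq, star_eq_adjoint] at this

lemma normal_qn {N : H →L[ℂ] H} (hN : adjoint N ∘L N = N ∘L adjoint N) : IsQuasinormal N := by
  have h : Commute (adjoint N ∘L N) N := by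
    change adjoint N * N * N = N * (adjoint N * N)
    have hN' : adjoint N * N = N * adjoint N := hN
    rw [hN', mul_assoc, hN', ← mul_assoc]
  exact (h.cfcₙ_nnreal NNReal.sqrt).symm

lemma norm_pow_apply {T : H →L[ℂ] H} (h : IsQuasinormal T) (n : ℕ) (x : H) :
    ‖(T ^ n) x‖ = ‖(modulus T ^ n) x‖ := by
  induction n generalizing x with
  | zero => simp
  | succ n ih =>
    rw [pow_succ' T, mulap, ← norm_modulus_apply, ← mulap, ((qn_commute h).pow_right n).eq,
      mulap, ih, ← mulap, ← pow_succ]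

lemma mval_bdd (T : H →L[ℂ] H) :
    BddBelow {r : ℝ | ∃ x : H, ‖x‖ = 1 ∧ r = (modulus T).reApplyInnerSelf x} := by
  refine ⟨0, ?_⟩
  rintro r ⟨x, -, rfl⟩
  exact ((nonneg_iff_isPositive _).1 (modulus_nonneg' T)).2 x

lemma mval_nonneg (T : H →L[ℂ] H) : 0 ≤ mval (modulus T) := by
  apply Real.sInf_nonneg
  rintro r ⟨x, -, rfl⟩
  exact ((nonneg_iff_isPositive _).1 (modulus_nonneg' T)).2 x

lemma mval_mul_le (T : H →L[ℂ] H) (x : H) : mval (modulus T) * ‖x‖ ≤ ‖T x‖ := by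
  by_cases hx : x = 0
  · simp [hx]
  have hx' : 0 < ‖x‖ := norm_pos_iff.2 hx
  set u : H := ((‖x‖⁻¹ : ℝ) : ℂ) • x with hu
  have hu1 : ‖u‖ = 1 := by
    rw [hu, norm_smul]; simp [hx'.ne']
  have h1 : mval (modulus T) ≤ (modulus T).reApplyInnerSelf u := csInf_le (mval_bdd T) ⟨u, hu1, rfl⟩
  have h2 : (modulus T).reApplyInnerSelf u ≤ ‖T u‖ := by
    rw [reApplyInnerSelf_apply, ← norm_modulus_apply]
    calc _ ≤ ‖modulus T u‖ * ‖u‖ := re_inner_le_norm _ _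
      _ = _ := by rw [hu1, mul_one]
  have h3 : ‖T u‖ = ‖x‖⁻¹ * ‖T x‖ := by
    rw [hu, map_smul, norm_smul]; simp
  have := h1.trans h2
  rw [h3] at this
  calc _ ≤ ‖x‖⁻¹ * ‖T x‖ * ‖x‖ := by gcongr
    _ = _ := by field_simp

lemma le_mval [Nontrivial H] (T : H →L[ℂ] H) (a : ℝ)
    (h : 0 ≤ modulus T - algebraMap ℝ (H →L[ℂ] H) a) : a ≤ mval (modulus T) := by
  apply le_csInf
  · obtain ⟨x, hx⟩ := exists_norm_eq H (zero_le_one (α := ℝ))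
    exact ⟨_, x, hx, rfl⟩
  rintro r ⟨x, hx, rfl⟩
  have h2 := ((nonneg_iff_isPositive _).1 h).2 x
  rw [reApplyInnerSelf_apply] at h2 ⊢
  have h3 : (algebraMap ℝ (H →L[ℂ] H) a) x = a • x := by
    rw [Algebra.algebraMap_eq_smul_one]; simp
  rw [sub_apply, h3, inner_sub_left, map_sub] at h2
  have h4 : RCLike.re (inner ℂ (a • x) x) = a := by
    have : a • x = (a : ℂ) • x := by simp
    rw [this, inner_smul_left, inner_self_eq_norm_sq_to_K, hx]; simp
  linarith

/-- eigenvector from convergence -/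
lemma eig_of_tendsto {T : H →L[ℂ] H} (h : IsQuasinormal T) {s : ℝ} (hs : 0 < s) (x : H) {c : ℝ}
    (hc : c ≠ 0) (hlim : Tendsto (fun n : ℕ => (‖(T ^ n) x‖ / s ^ n) ^ 2) atTop (𝓝 c)) :
    ∃ z : H, z ≠ 0 ∧ modulus T z = (s : ℂ) • z := by
  set P := modulus T with hP
  have hsC : (s : ℂ) ≠ 0 := by exact_mod_cast hs.ne'
  set B : H →L[ℂ] H := (s : ℂ)⁻¹ • P with hB
  have hBs : ∀ x y : H, inner ℂ (B x) y = inner ℂ x (B y) := by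
    intro x y
    rw [hB, smul_apply, smul_apply, inner_smul_left, inner_smul_right, modulus_symm]; simp [hP]
  have hBn : ∀ (n : ℕ) (x y : H), inner ℂ ((B ^ n) x) y = inner ℂ x ((B ^ n) y) := by
    intro n
    induction n with
    | zero => simp
    | succ n ih =>
      intro x y
      rw [pow_succ', mulap, hBs, ih, ← mulap, ← pow_succ, ← pow_succ']
  have ha : ∀ n : ℕ, (‖(T ^ n) x‖ / s ^ n) ^ 2 = ‖(B ^ n) x‖ ^ 2 := by
    intro n
    rw [norm_pow_apply h, hB, smul_pow, smul_apply, norm_smul, norm_pow, norm_inv,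
      Complex.norm_real, Real.norm_of_nonneg hs.le]
    rw [inv_pow]; congr 1; field_simp; rfl
  simp only [ha] at hlim
  have hdist : ∀ n m : ℕ, ‖(B ^ (2 * n)) x - (B ^ (2 * m)) x‖ ^ 2 =
      ‖(B ^ (2 * n)) x‖ ^ 2 - 2 * ‖(B ^ (n + m)) x‖ ^ 2 + ‖(B ^ (2 * m)) x‖ ^ 2 := by
    intro n m
    rw [@norm_sub_sq ℂ]
    congr 3
    rw [← @inner_self_eq_norm_sq ℂ, hBn, hBn, ← mulap, ← mulap, ← pow_add, ← pow_add]
    congr 4; ring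
  have hcau : CauchySeq (fun n : ℕ => (B ^ (2 * n)) x) := by
    rw [Metric.cauchySeq_iff]
    intro ε hε
    have h4 : (0:ℝ) < ε ^ 2 / 4 := by positivity
    obtain ⟨K, hK⟩ := (Metric.tendsto_atTop.1 hlim) _ h4
    refine ⟨K, fun m hm n hn => ?_⟩
    rw [dist_eq_norm]
    refine lt_of_pow_lt_pow_left₀ 2 hε.le ?_
    rw [hdist]
    have e1 := hK (2 * m) (by omega)
    have e2 := hK (2 * n) (by omega)
    have e3 := hK (m + n) (by omega)
    rw [Real.dist_eq, abs_lt] at e1 e2 e3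
    linarith [e1.2, e2.2, e3.1]
  obtain ⟨z, hz⟩ := cauchySeq_tendsto_of_complete hcau
  have hBBz : B (B z) = z := by
    have h1 : Tendsto (fun n : ℕ => B (B ((B ^ (2 * n)) x))) atTop (𝓝 (B (B z))) :=
      ((B.continuous.comp B.continuous).tendsto z).comp hz
    have h2 : Tendsto (fun n : ℕ => (B ^ (2 * (n + 1))) x) atTop (𝓝 z) :=
      hz.comp (tendsto_add_atTop_nat 1)
    refine tendsto_nhds_unique h1 (h2.congr fun n => ?_)
    rw [mul_add, mul_one, add_comm, pow_add, pow_two]; rfl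
  have hz0 : z ≠ 0 := by
    rintro rfl
    have h1 : Tendsto (fun n : ℕ => ‖(B ^ (2 * n)) x‖ ^ 2) atTop (𝓝 0) := by
      simpa using (hz.norm.pow 2)
    have h2 : Tendsto (fun n : ℕ => ‖(B ^ (2 * n)) x‖ ^ 2) atTop (𝓝 c) :=
      hlim.comp (tendsto_id.const_mul_atTop' (by norm_num))
    exact hc (tendsto_nhds_unique h2 h1)
  refine ⟨z, hz0, ?_⟩
  have hBz : B z = z := by
    rw [← sub_eq_zero]
    set u := B z - z with hu
    have h1 : B u = -u := by rw [hu, map_sub, hBBz]; abel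
    have h2 : P u = -((s : ℂ) • u) := by
      have : P u = (s : ℂ) • B u := by rw [hB, smul_apply, smul_smul, mul_inv_cancel₀ hsC, one_smul]
      rw [this, h1, smul_neg]
    have h3 := ((nonneg_iff_isPositive _).1 (modulus_nonneg' T)).2 u
    rw [reApplyInnerSelf_apply, ← hP, h2, inner_neg_left, inner_smul_left,
      inner_self_eq_norm_sq_to_K] at h3
    have h4 : RCLike.re (-((starRingEnd ℂ) (s : ℂ) * ((‖u‖ : ℂ)) ^ 2)) = -(s * ‖u‖ ^ 2) := by
      rw [Complex.conj_ofReal, ← Complex.ofReal_pow, ← Complex.ofReal_mul, ← Complex.ofReal_neg]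
      exact Complex.ofReal_re _
    have h5 : 0 ≤ -(s * ‖u‖ ^ 2) := by rw [← h4]; exact h3
    have : ‖u‖ ^ 2 ≤ 0 := by
      by_contra hcon
      push Not at hcon
      nlinarith [mul_pos hs hcon]
    have : ‖u‖ = 0 := by nlinarith [norm_nonneg u]
    exact norm_eq_zero.1 this
  rw [hB, smul_apply] at hBz
  conv_rhs => rw [← hBz]
  rw [smul_smul, mul_inv_cancel₀ hsC, one_smul]

lemma pow_intertwine {R : G →L[ℂ] G} {T : H →L[ℂ] H} {X : H →L[ℂ] G} {l : ℂ}
    (hX : R ∘L X = l • (X ∘L T)) (n : ℕ) (x : H) : (R ^ n) (X x) = l ^ n • X ((T ^ n) x) := by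
  induction n with
  | zero => simp
  | succ n ih =>
    have h1 : R (X ((T ^ n) x)) = l • X (T ((T ^ n) x)) := congrArg (fun f => f ((T ^ n) x)) hX
    rw [pow_succ', mulap, ih, map_smul, h1, smul_smul, pow_succ, pow_succ' T, mulap]

/-- Necessity. -/
lemma necessity {R : G →L[ℂ] G} {T : H →L[ℂ] H} (hR : IsQuasinormal R) (hT : IsQuasinormal T)
    (hRinj : Function.Injective R) (hT0 : 0 < ‖T‖) {X : H →L[ℂ] G} (hX0 : X ≠ 0) {l : ℂ}
    (hX : R ∘L X = l • (X ∘L T)) :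
    mval (modulus R) / ‖T‖ < ‖l‖ ∨ (mval (modulus R) / ‖T‖ = ‖l‖ ∧
      (∃ x : G, x ≠ 0 ∧ modulus R x = (mval (modulus R) : ℂ) • x) ∧
      (∃ y : H, y ≠ 0 ∧ modulus T y = (‖T‖ : ℂ) • y)) := by
  set m := mval (modulus R) with hm
  have hm0 : 0 ≤ m := mval_nonneg R
  obtain ⟨x, hx⟩ : ∃ x, X x ≠ 0 := by
    by_contra hcon
    push Not at hcon
    exact hX0 (ContinuousLinearMap.ext hcon)
  have hl : l ≠ 0 := by
    rintro rfl
    rw [zero_smul] at hX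
    have : R (X x) = R 0 := by rw [map_zero]; exact congrArg (fun f => f x) hX
    exact hx (hRinj this)
  have hlpos : 0 < ‖l‖ := norm_pos_iff.2 hl
  have hXpos : 0 < ‖X‖ := norm_pos_iff.2 hX0
  have hxpos : 0 < ‖X x‖ := norm_pos_iff.2 hx
  rcases lt_or_ge (m / ‖T‖) ‖l‖ with h | hge
  · exact Or.inl h
  right
  have hmpos : 0 < m := by
    rcases hm0.eq_or_lt with h | h
    · rw [← h, zero_div] at hge; linarith
    · exact h
  have hmono : ∀ n : ℕ, ‖(R ^ n) (X x)‖ / m ^ n ≤ ‖(R ^ (n+1)) (X x)‖ / m ^ (n+1) := by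
    intro n
    rw [div_le_div_iff₀ (by positivity) (by positivity), pow_succ' R, mulap, pow_succ]
    have := mval_mul_le R ((R ^ n) (X x))
    rw [← hm] at this
    calc _ = (m * ‖(R ^ n) (X x)‖) * m ^ n := by ring
      _ ≤ _ := by gcongr
  have hanti : ∀ n : ℕ, ‖(T ^ (n+1)) x‖ / ‖T‖ ^ (n+1) ≤ ‖(T ^ n) x‖ / ‖T‖ ^ n := by
    intro n
    rw [div_le_div_iff₀ (by positivity) (by positivity), pow_succ' T, mulap, pow_succ]
    have := T.le_opNorm ((T ^ n) x)
    calc _ ≤ (‖T‖ * ‖(T ^ n) x‖) * ‖T‖ ^ n := by gcongr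
      _ = _ := by ring
  set q := ‖l‖ * ‖T‖ / m with hq
  have hqpos : 0 < q := by positivity
  have hq1 : q ≤ 1 := by
    rw [hq, div_le_one hmpos]
    rwa [le_div_iff₀ hT0] at hge
  have hbd : ∀ n : ℕ, ‖(R ^ n) (X x)‖ / m ^ n ≤ ‖X‖ * q ^ n * (‖(T ^ n) x‖ / ‖T‖ ^ n) := by
    intro n
    rw [pow_intertwine hX, norm_smul, norm_pow]
    have := X.le_opNorm ((T ^ n) x)
    calc _ ≤ ‖l‖ ^ n * (‖X‖ * ‖(T ^ n) x‖) / m ^ n := by gcongr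
      _ = _ := by rw [hq, div_pow, mul_pow]; field_simp
  have hmono' : Monotone (fun n : ℕ => ‖(R ^ n) (X x)‖ / m ^ n) := monotone_nat_of_le_succ hmono
  have hanti' : Antitone (fun n : ℕ => ‖(T ^ n) x‖ / ‖T‖ ^ n) := antitone_nat_of_succ_le hanti
  have hlow : ∀ n : ℕ, ‖X x‖ ≤ ‖(R ^ n) (X x)‖ / m ^ n := fun n => by
    simpa using hmono' (Nat.zero_le n)
  have hup : ∀ n : ℕ, ‖(T ^ n) x‖ / ‖T‖ ^ n ≤ ‖x‖ := fun n => by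
    simpa using hanti' (Nat.zero_le n)
  have hqe : q = 1 := by
    rcases hq1.eq_or_lt with h | h
    · exact h
    exfalso
    have h1 : Tendsto (fun n : ℕ => ‖X‖ * q ^ n * ‖x‖) atTop (𝓝 0) := by
      simpa using ((tendsto_pow_atTop_nhds_zero_of_lt_one hqpos.le h).const_mul ‖X‖).mul_const ‖x‖
    have h2 : ‖X x‖ ≤ 0 := ge_of_tendsto' h1 fun n =>
      (hlow n).trans ((hbd n).trans (mul_le_mul_of_nonneg_left (hup n) (by positivity)))
    linarith
  simp only [hqe, one_pow, mul_one] at hbd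
  refine ⟨?_, ?_, ?_⟩
  · rw [hq, div_eq_one_iff_eq hmpos.ne'] at hqe
    rw [← hqe]; field_simp
  · have hb : BddAbove (Set.range (fun n : ℕ => ‖(R ^ n) (X x)‖ / m ^ n)) := by
      refine ⟨‖X‖ * ‖x‖, ?_⟩
      rintro _ ⟨n, rfl⟩
      exact (hbd n).trans (mul_le_mul_of_nonneg_left (hup n) hXpos.le)
    have ht := tendsto_atTop_ciSup hmono' hb
    have hc : ‖X x‖ ≤ ⨆ n : ℕ, ‖(R ^ n) (X x)‖ / m ^ n := ge_of_tendsto' ht hlow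
    exact eig_of_tendsto hR hmpos (X x) (c := _) (pow_ne_zero 2 (hxpos.trans_le hc).ne') (ht.pow 2)
  · have hb : BddBelow (Set.range (fun n : ℕ => ‖(T ^ n) x‖ / ‖T‖ ^ n)) := by
      refine ⟨0, ?_⟩
      rintro _ ⟨n, rfl⟩
      positivity
    have ht := tendsto_atTop_ciInf hanti' hb
    have hc : ‖X x‖ / ‖X‖ ≤ ⨅ n : ℕ, ‖(T ^ n) x‖ / ‖T‖ ^ n := ge_of_tendsto' ht fun n => by
      rw [div_le_iff₀' hXpos]
      exact (hlow n).trans (hbd n)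
    have hp : 0 < ‖X x‖ / ‖X‖ := by positivity
    exact eig_of_tendsto hT hT0 x (c := _) (pow_ne_zero 2 (hp.trans_le hc).ne') (ht.pow 2)

lemma self_comm_comp {T : H →L[ℂ] H} (hT : IsQuasinormal T) :
    (T * adjoint T - adjoint T * T) * T = 0 := by
  have h1 : Commute (adjoint T * T) T := by
    rw [← modulus_mul_self]; exact (qn_commute hT).mul_left (qn_commute hT)
  rw [sub_mul, mul_assoc, ← h1.eq, sub_self]

lemma adj_self_comm {T : H →L[ℂ] H} (hT : IsQuasinormal T) :
    adjoint T * (T * adjoint T - adjoint T * T) = 0 := by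
  have h := congrArg star (self_comm_comp hT)
  rw [star_mul, star_zero, star_sub, star_mul, star_mul] at h
  simpa only [star_eq_adjoint, adjoint_adjoint] using h

lemma pure_zero {T : H →L[ℂ] H} (hT : IsQuasinormal T) (hp : IsPure T) (x : H)
    (hx : ∀ n : ℕ, (T * adjoint T - adjoint T * T) ((adjoint T ^ n) x) = 0) : x = 0 := by
  set D := T * adjoint T - adjoint T * T with hD
  let M : Submodule ℂ H := ⨅ n : ℕ, (D * adjoint T ^ n).ker
  have hM : ∀ y, y ∈ M ↔ ∀ n : ℕ, D ((adjoint T ^ n) y) = 0 := by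
    intro y
    simp only [M, Submodule.mem_iInf]
    rfl
  have hcl : IsClosed (M : Set H) := by
    have : (M : Set H) = ⋂ n : ℕ, {y | D ((adjoint T ^ n) y) = 0} := by
      ext y; simp [hM]
    rw [this]
    exact isClosed_iInter fun n => isClosed_eq (D.continuous.comp (adjoint T ^ n).continuous)
      continuous_const
  have hPD : Commute (adjoint T * T) D := by
    rw [← modulus_mul_self]
    have : Commute (modulus T) D :=
      ((qn_commute hT).mul_right (qn_commute_adj hT)).sub_right
        ((qn_commute_adj hT).mul_right (qn_commute hT))
    exact this.mul_left this
  have hPT : Commute (adjoint T * T) (adjoint T) := by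
    rw [← modulus_mul_self]
    exact (qn_commute_adj hT).mul_left (qn_commute_adj hT)
  have hbot := hp M hcl ?_ ?_ ?_
  · have : x ∈ M := (hM x).2 hx
    rw [hbot] at this
    simpa using this
  · intro y hy
    rw [hM] at hy ⊢
    intro n
    cases n with
    | zero =>
      have := congrArg (fun f => f y) (self_comm_comp hT)
      exact this
    | succ n =>
      have h1 : (adjoint T ^ (n + 1)) (T y) = (adjoint T * T) ((adjoint T ^ n) y) := by
        have : (adjoint T ^ (n+1)) * T = (adjoint T * T) * adjoint T ^ n := by
          rw [(hPT.pow_right n).eq, pow_succ, mul_assoc]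
        exact congrArg (fun f => f y) this
      rw [h1, ← mulap, ← hPD.eq, mulap, hy n, map_zero]
  · intro y hy
    rw [hM] at hy ⊢
    intro n
    have := hy (n + 1)
    rwa [pow_succ, mulap] at this
  · intro y hy
    rw [hM] at hy
    have := hy 0
    rw [pow_zero, one_apply_eq_self, hD, sub_apply, mulap, mulap] at this
    exact sub_eq_zero.1 this

/-- No intertwiner from a normal operator into a pure quasinormal operator. -/
lemma no_normal_to_pure {T : H →L[ℂ] H} (hT : IsQuasinormal T) (hp : IsPure T)
    {B : G →L[ℂ] G} (hB : DenseRange B) {X : G →L[ℂ] H} (hX : T ∘L X = X ∘L B) : X = 0 := by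
  set D := T * adjoint T - adjoint T * T with hD
  have hPD : Commute (adjoint T * T) D := by
    rw [← modulus_mul_self]
    have : Commute (modulus T) D :=
      ((qn_commute hT).mul_right (qn_commute_adj hT)).sub_right
        ((qn_commute_adj hT).mul_right (qn_commute hT))
    exact this.mul_left this
  have hPT : Commute (adjoint T * T) (adjoint T) := by
    rw [← modulus_mul_self]
    exact (qn_commute_adj hT).mul_left (qn_commute_adj hT)
  have hXa : ∀ y, X (B y) = T (X y) := fun y => (congrArg (fun f => f y) hX).symm
  have key : ∀ (n : ℕ) (y : G), D ((adjoint T ^ n) (X y)) = 0 := by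
    intro n
    induction n with
    | zero =>
      intro y
      refine hB.induction_on (p := fun y => D ((adjoint T ^ 0) (X y)) = 0) y ?_ ?_
      · exact isClosed_eq (D.continuous.comp ((adjoint T ^ 0).continuous.comp X.continuous))
          continuous_const
      · intro z
        rw [hXa]
        have := congrArg (fun f => f (X z)) (self_comm_comp hT)
        exact this
    | succ n ih =>
      intro y
      refine hB.induction_on (p := fun y => D ((adjoint T ^ (n+1)) (X y)) = 0) y ?_ ?_
      · exact isClosed_eq (D.continuous.comp ((adjoint T ^ (n+1)).continuous.comp X.continuous))
          continuous_const
      · intro z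
        rw [hXa]
        have h1 : (adjoint T ^ (n + 1)) (T (X z)) = (adjoint T * T) ((adjoint T ^ n) (X z)) := by
          have : (adjoint T ^ (n+1)) * T = (adjoint T * T) * adjoint T ^ n := by
            rw [(hPT.pow_right n).eq, pow_succ, mul_assoc]
          exact congrArg (fun f => f (X z)) this
        rw [h1, ← mulap, ← hPD.eq, mulap, ih z, map_zero]
  ext y
  exact pure_zero hT hp (X y) fun n => key n y

lemma spec_bounds (T : H →L[ℂ] H) {t : ℝ} (ht : t ∈ spectrum ℝ (modulus T)) :
    0 ≤ t ∧ t ≤ ‖T‖ := by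
  refine ⟨spectrum_nonneg_of_nonneg (modulus_nonneg' T) ht, ?_⟩
  have h := norm_apply_le_norm_cfc (fun t : ℝ => t) (modulus T) ht
    continuousOn_id (modulus_sa T)
  rw [cfc_id' ℝ (modulus T) (modulus_sa T), norm_modulus] at h
  exact (le_abs_self t).trans h

/-- small vectors -/
lemma exists_small [Nontrivial H] {T : H →L[ℂ] H} (hT : IsQuasinormal T) {a : ℝ}
    (ha : mval (modulus T) < a) :
    ∃ y : H, y ≠ 0 ∧ ∃ C : ℝ, ∀ n : ℕ, ‖(T ^ n) y‖ ≤ C * a ^ n := by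
  have ha0 : 0 < a := (mval_nonneg T).trans_lt ha
  have hsa := modulus_sa T
  set P := modulus T with hP
  set F : H →L[ℂ] H := cfc (fun t : ℝ => max (a - t) 0) P with hF
  have hF0 : F ≠ 0 := by
    intro h0
    have h1 : P - algebraMap ℝ (H →L[ℂ] H) a = cfc (fun t : ℝ => max (t - a) 0) P := by
      have e1 : P - algebraMap ℝ (H →L[ℂ] H) a = cfc (fun t : ℝ => t - a) P := by
        rw [cfc_sub (fun t : ℝ => t) (fun _ => a) P, cfc_id' ℝ P hsa, cfc_const a P hsa]
      have e2 : cfc (fun t : ℝ => t - a) P =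
          cfc (fun t : ℝ => max (t - a) 0 - max (a - t) 0) P := by
        apply cfc_congr
        intro t _
        rcases le_total t a with h | h
        · simp [max_eq_right (sub_nonpos.2 h), max_eq_left (sub_nonneg.2 h)]
        · simp [max_eq_right (sub_nonpos.2 h), max_eq_left (sub_nonneg.2 h)]
      rw [e1, e2, cfc_sub (fun t : ℝ => max (t - a) 0) (fun t : ℝ => max (a - t) 0) P
        (by fun_prop) (by fun_prop), ← hF, h0, sub_zero]
    have h2 : 0 ≤ P - algebraMap ℝ (H →L[ℂ] H) a := by
      rw [h1]
      exact cfc_nonneg fun t _ => le_max_right _ _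
    exact absurd (le_mval T a h2) (not_le.2 ha)
  obtain ⟨w, hw⟩ : ∃ w, F w ≠ 0 := by
    by_contra hcon
    push Not at hcon
    exact hF0 (ContinuousLinearMap.ext hcon)
  refine ⟨F w, hw, a * ‖w‖, fun n => ?_⟩
  rw [norm_pow_apply hT, ← mulap]
  have h1 : P ^ n * F = cfc (fun t : ℝ => t ^ n * max (a - t) 0) P := by
    rw [cfc_mul (fun t : ℝ => t ^ n) (fun t : ℝ => max (a - t) 0) P (by fun_prop) (by fun_prop),
      cfc_pow_id P n hsa]
  have h2 : ‖P ^ n * F‖ ≤ a ^ n * a := by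
    rw [h1]
    refine norm_cfc_le (by positivity) fun t ht => ?_
    have ht0 := (spec_bounds T ht).1
    rw [Real.norm_of_nonneg (by positivity)]
    rcases le_total t a with h | h
    · rw [max_eq_left (sub_nonneg.2 h)]
      have : a - t ≤ a := by linarith
      have : 0 ≤ a - t := by linarith
      gcongr
    · rw [max_eq_right (sub_nonpos.2 h), mul_zero]; positivity
  calc _ ≤ ‖P ^ n * F‖ * ‖w‖ := le_opNorm _ _
    _ ≤ a ^ n * a * ‖w‖ := by gcongr
    _ = _ := by ring

/-- backward orbit of the adjoint -/
lemma exists_backward {T : H →L[ℂ] H} (hT : IsQuasinormal T) (hp : IsPure T) {b : ℝ}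
    (hb0 : 0 < b) (hb : b < ‖T‖) :
    ∃ v : ℕ → H, v 0 ≠ 0 ∧ adjoint T (v 0) = 0 ∧ (∀ n, adjoint T (v (n + 1)) = v n) ∧
      (∀ n, inner ℂ (v (n + 1)) (v 0) = 0) ∧ ∃ C : ℝ, ∀ n : ℕ, ‖v n‖ ≤ C * b⁻¹ ^ n := by
  have hsa := modulus_sa T
  set P := modulus T with hP
  let g : ℕ → ℝ → ℝ := fun n t => (max t b)⁻¹ ^ n * max (t - b) 0
  have hg : ∀ n, Continuous (g n) := by
    intro n
    have h1 : Continuous fun t : ℝ => (max t b)⁻¹ :=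
      (by fun_prop : Continuous fun t : ℝ => max t b).inv₀
        fun t => (hb0.trans_le (le_max_right t b)).ne'
    exact (h1.pow n).mul (by fun_prop)
  let F : ℕ → H →L[ℂ] H := fun n => cfc (g n) P
  have hFP : ∀ n, P * F (n + 1) = F n := by
    intro n
    have h1 : P * F (n + 1) = cfc (fun t : ℝ => t * g (n + 1) t) P := by
      rw [cfc_mul (fun t : ℝ => t) (g (n+1)) P (by fun_prop) (hg _).continuousOn,
        cfc_id' ℝ P hsa]
    rw [h1]
    apply cfc_congr
    intro t _
    simp only [g]
    rcases le_total t b with h | h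
    · simp [max_eq_right (sub_nonpos.2 h)]
    · have : t ≠ 0 := (hb0.trans_le h).ne'
      rw [max_eq_left h, pow_succ]
      field_simp
  have hFn : ∀ n, ‖F n‖ ≤ b⁻¹ ^ n * ‖T‖ := by
    intro n
    refine norm_cfc_le (by positivity) fun t ht => ?_
    have ht0 := (spec_bounds T ht)
    have hmx : 0 < max t b := hb0.trans_le (le_max_right t b)
    rw [Real.norm_of_nonneg (by positivity)]
    have h1 : (max t b)⁻¹ ≤ b⁻¹ := inv_anti₀ hb0 (le_max_right _ _)
    have h2 : max (t - b) 0 ≤ ‖T‖ := max_le (by linarith) (norm_nonneg _)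
    simp only [g]
    gcongr
  have hFT : ∀ n, Commute (F n) T := fun n => (qn_commute hT).cfc_real (g n)
  have hFTa : ∀ n, Commute (F n) (adjoint T) := fun n => (qn_commute_adj hT).cfc_real (g n)
  have hF0 : F 0 ≠ 0 := by
    intro h0
    have h1 : P = cfc (fun t : ℝ => min t b) P := by
      have e2 : cfc (fun t : ℝ => t) P = cfc (fun t : ℝ => min t b + g 0 t) P := by
        apply cfc_congr
        intro t _
        simp only [g]
        rcases le_total t b with h | h
        · simp [max_eq_right (sub_nonpos.2 h), h]
        · simp [max_eq_left (sub_nonneg.2 h), h]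
      have e3 := cfc_add P (fun t : ℝ => min t b) (g 0) (by fun_prop) (hg 0).continuousOn
      rw [cfc_id' ℝ P hsa, e3] at e2
      change P = _ + F 0 at e2
      rwa [h0, add_zero] at e2
    have h2 : ‖P‖ ≤ b := by
      rw [h1]
      refine norm_cfc_le hb0.le fun t ht => ?_
      have ht0 := (spec_bounds T ht).1
      rw [Real.norm_of_nonneg (le_min ht0 hb0.le)]
      exact min_le_right _ _
    rw [hP, norm_modulus] at h2
    linarith
  obtain ⟨w, hw, hw0⟩ : ∃ w, adjoint T w = 0 ∧ F 0 w ≠ 0 := by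
    by_contra hcon
    push Not at hcon
    apply hF0
    ext h
    refine pure_zero hT hp _ fun n => ?_
    set D := T * adjoint T - adjoint T * T with hD
    have hc : Commute (F 0) (D * adjoint T ^ n) :=
      ((((hFT 0).mul_right (hFTa 0)).sub_right ((hFTa 0).mul_right (hFT 0)))).mul_right
        ((hFTa 0).pow_right n)
    have h1 : D ((adjoint T ^ n) (F 0 h)) = F 0 (D ((adjoint T ^ n) h)) :=
      (congrArg (fun f => f h) hc.eq).symm
    rw [h1]
    apply hcon
    exact congrArg (fun f => f ((adjoint T ^ n) h)) (adj_self_comm hT)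
  have hz0 : adjoint T (F 0 w) = 0 := by
    rw [← mulap, ← (hFTa 0).eq, mulap, hw, map_zero]
  have hPn : ∀ k n, P ^ k * F (n + k) = F n := by
    intro k
    induction k with
    | zero => simp
    | succ k ih =>
      intro n
      rw [pow_succ, mul_assoc, ← add_assoc, hFP, ih]
  refine ⟨fun n => (T ^ n) (F (2 * n) w), by simpa using hw0, by simpa using hz0, ?_, ?_,
    ‖T‖ * ‖w‖, ?_⟩
  · intro n
    have hPT : Commute (P * P) T := (qn_commute hT).mul_left (qn_commute hT)
    have : adjoint T * (T ^ (n + 1) * F (2 * (n + 1))) = T ^ n * F (2 * n) := by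
      rw [pow_succ', mul_assoc, ← mul_assoc, ← modulus_mul_self, ← hP, ← mul_assoc,
        (hPT.pow_right n).eq, mul_assoc, mul_assoc, mul_add, mul_one]
      rw [hFP, hFP]
    exact congrArg (fun f => f w) this
  · intro n
    have : (T ^ (n + 1)) (F (2 * (n + 1)) w) = T ((T ^ n) (F (2 * (n + 1)) w)) := by
      rw [pow_succ', mulap]
    simp only [this, mul_zero, pow_zero, one_apply_eq_self]
    rw [← adjoint_inner_right, hz0, inner_zero_right]
  · intro n
    have h1 : (P ^ n) (F (2 * n) w) = F n w := by
      have := hPn n n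
      rw [← two_mul] at this
      exact congrArg (fun f => f w) this
    change ‖(T ^ n) (F (2 * n) w)‖ ≤ _
    rw [norm_pow_apply hT, ← hP, h1]
    calc _ ≤ ‖F n‖ * ‖w‖ := le_opNorm _ _
      _ ≤ b⁻¹ ^ n * ‖T‖ * ‖w‖ := by gcongr; exact hFn n
      _ = _ := by ring

/-- Sufficiency. -/
lemma sufficiency [Nontrivial G] {R : G →L[ℂ] G} {T : H →L[ℂ] H} (hR : IsQuasinormal R)
    (hT : IsQuasinormal T) (hp : IsPure T) (hT0 : 0 < ‖T‖) {l : ℂ}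
    (hl : mval (modulus R) / ‖T‖ < ‖l‖) :
    ∃ X : H →L[ℂ] G, X ≠ 0 ∧ R ∘L X = l • (X ∘L T) := by
  have hm0 := mval_nonneg R
  have hlpos : 0 < ‖l‖ := (div_nonneg hm0 hT0.le).trans_lt hl
  have hl0 : l ≠ 0 := norm_pos_iff.1 hlpos
  obtain ⟨a, ha1, ha2⟩ := exists_between ((div_lt_iff₀ hT0).1 hl)
  have ha0 : 0 < a := hm0.trans_lt ha1
  obtain ⟨b, hb1, hb2⟩ := exists_between ((div_lt_iff₀' hlpos).2 ha2)
  have hb0 : 0 < b := (div_pos ha0 hlpos).trans hb1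
  obtain ⟨y, hy0, C, hC⟩ := exists_small hR ha1
  obtain ⟨v, hv0, hvk, hvs, hvo, C', hC'⟩ := exists_backward hT hp hb0 hb2
  obtain ⟨f, hf⟩ : ∃ f : ℕ → H →L[ℂ] G, ∀ n, f n = l⁻¹ ^ n • (innerSL ℂ (v n)).smulRight ((R ^ n) y) :=
    ⟨_, fun _ => rfl⟩
  have hfa : ∀ (n : ℕ) (h : H), f n h = l⁻¹ ^ n • ((inner ℂ (v n) h : ℂ) • (R ^ n) y) := fun n h => by
    rw [hf]; simp
  set q := a * b⁻¹ * ‖l‖⁻¹ with hq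
  have hq0 : 0 ≤ q := by positivity
  have hq1 : q < 1 := by
    rw [div_lt_iff₀ hlpos] at hb1
    rw [hq]
    have : a * b⁻¹ * ‖l‖⁻¹ = a / (b * ‖l‖) := by field_simp
    rw [this, div_lt_one (by positivity)]
    exact hb1
  have hsum : Summable f := by
    refine Summable.of_norm_bounded (g := fun n => C' * C * q ^ n)
      ((summable_geometric_of_lt_one hq0 hq1).mul_left _) fun n => ?_
    have hCn : 0 ≤ C' * b⁻¹ ^ n := (norm_nonneg _).trans (hC' n)
    calc ‖f n‖ = ‖l‖⁻¹ ^ n * (‖v n‖ * ‖(R ^ n) y‖) := by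
          rw [hf, norm_smul, norm_smulRight_apply, innerSL_apply_norm, norm_pow, norm_inv]
      _ ≤ ‖l‖⁻¹ ^ n * ((C' * b⁻¹ ^ n) * (C * a ^ n)) := by
          gcongr
          · exact hC' n
          · exact hC n
      _ = _ := by rw [hq, mul_pow, mul_pow]; ring
  have hX := hsum.hasSum
  generalize (∑' n, f n) = X at hX
  have hXh : ∀ h, HasSum (fun n => f n h) (X h) := fun h =>
    (ContinuousLinearMap.apply ℂ G h).hasSum hX
  refine ⟨X, ?_, ?_⟩
  · intro h0
    have h1 := hXh (v 0)
    have h2 : HasSum (fun n => f n (v 0)) (f 0 (v 0)) := by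
      apply hasSum_single
      intro n hn
      obtain ⟨k, rfl⟩ := Nat.exists_eq_succ_of_ne_zero hn
      rw [hfa, hvo k, zero_smul, smul_zero]
    have h3 := h1.unique h2
    rw [h0, hfa] at h3
    simp only [pow_zero, one_smul, zero_apply, one_apply_eq_self] at h3
    rcases smul_eq_zero.1 h3.symm with h | h
    · exact hv0 (inner_self_eq_zero.1 h)
    · exact hy0 h
  · ext h
    change R (X h) = l • X (T h)
    have h1 : HasSum (fun n => R (f n h)) (R (X h)) := R.hasSum (hXh h)
    have h2 : HasSum (fun n => l • f n (T h)) (l • X (T h)) := (hXh (T h)).const_smul l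
    have h3 : l • f 0 (T h) = 0 := by
      rw [hfa, ← adjoint_inner_left, hvk]; simp
    have h4 := (hasSum_nat_add_iff' 1).2 h2
    rw [Finset.sum_range_one, h3, sub_zero] at h4
    have h5 : (fun n => l • f (n + 1) (T h)) = fun n => R (f n h) := by
      funext n
      rw [hfa, hfa, map_smul, map_smul, ← adjoint_inner_left, hvs, pow_succ' R, mulap, smul_smul]
      congr 1
      rw [pow_succ']
      field_simp
    rw [h5] at h4
    exact h1.unique h4

end helpers

theorem extSpectrum_quasinormal_open_case
    {E H : Type*} [NormedAddCommGroup E] [InnerProductSpace ℂ E] [CompleteSpace E] [NormedAddCommGroup H] [InnerProductSpace ℂ H] [CompleteSpace H] [Nontrivial E] [Nontrivial H]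
    (N : E →L[ℂ] E) (hN : adjoint N ∘L N = N ∘L adjoint N)
    (T : H →L[ℂ] H) (hTqn : IsQuasinormal T) (hTpure : IsPure T)
    (R : WithLp 2 (E × H) →L[ℂ] WithLp 2 (E × H))
    (hR : ∀ (x : E) (y : H),
      R ((WithLp.equiv 2 (E × H)).symm (x, y)) = (WithLp.equiv 2 (E × H)).symm (N x, T y))
    (hRinj : Function.Injective R)
    (hcase : ¬ ((mval (modulus N) < mval (modulus T) ∧ (∃ x : E, x ≠ 0 ∧ modulus N x = (mval (modulus N) : ℂ) • x) ∧ (∃ y : H, y ≠ 0 ∧ modulus T y = (‖T‖ : ℂ) • y)) ∨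
      (mval (modulus N) = mval (modulus T) ∧
        (((∃ x : E, x ≠ 0 ∧ modulus N x = (mval (modulus N) : ℂ) • x) ∧ (∃ y : H, y ≠ 0 ∧ modulus T y = (‖T‖ : ℂ) • y)) ∨ ((∃ y : H, y ≠ 0 ∧ modulus T y = (mval (modulus T) : ℂ) • y) ∧ (∃ y : H, y ≠ 0 ∧ modulus T y = (‖T‖ : ℂ) • y)))) ∨
      (mval (modulus T) < mval (modulus N) ∧ (∃ y : H, y ≠ 0 ∧ modulus T y = (mval (modulus T) : ℂ) • y) ∧ (∃ y : H, y ≠ 0 ∧ modulus T y = (‖T‖ : ℂ) • y)))) :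
    extSpectrum R = extSpectrum N ∪
      {l : ℂ | min (mval (modulus N)) (mval (modulus T)) / ‖T‖ < ‖l‖} := by
  have hNqn := normal_qn hN
  let e := WithLp.prodContinuousLinearEquiv 2 ℂ E H
  let p1 : WithLp 2 (E × H) →L[ℂ] E := ContinuousLinearMap.fst ℂ E H ∘L e.toContinuousLinearMap
  let p2 : WithLp 2 (E × H) →L[ℂ] H := ContinuousLinearMap.snd ℂ E H ∘L e.toContinuousLinearMap
  let i1 : E →L[ℂ] WithLp 2 (E × H) :=
    e.symm.toContinuousLinearMap ∘L ContinuousLinearMap.inl ℂ E H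
  let i2 : H →L[ℂ] WithLp 2 (E × H) :=
    e.symm.toContinuousLinearMap ∘L ContinuousLinearMap.inr ℂ E H
  have hRi1 : ∀ x, R (i1 x) = i1 (N x) := by
    intro x
    have := hR x 0
    rw [map_zero] at this
    exact this
  have hRi2 : ∀ y, R (i2 y) = i2 (T y) := by
    intro y
    have := hR 0 y
    rw [map_zero] at this
    exact this
  have hp1R : ∀ z, p1 (R z) = N (p1 z) := by
    intro z
    have := congrArg p1 (hR (p1 z) (p2 z))
    exact this
  have hp2R : ∀ z, p2 (R z) = T (p2 z) := by
    intro z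
    have := congrArg p2 (hR (p1 z) (p2 z))
    exact this
  have hp1i1 : ∀ x, p1 (i1 x) = x := fun _ => rfl
  have hp2i2 : ∀ x, p2 (i2 x) = x := fun _ => rfl
  have hdec : ∀ z, i1 (p1 z) + i2 (p2 z) = z := by
    intro z
    apply e.injective
    rw [map_add]
    change (p1 z, (0 : H)) + ((0 : E), p2 z) = (p1 z, p2 z)
    simp
  have hi1inj : Function.Injective i1 := fun x y h => by
    rw [← hp1i1 x, h, hp1i1]
  have hi2inj : Function.Injective i2 := fun x y h => by
    rw [← hp2i2 x, h, hp2i2]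
  have hNinj : Function.Injective N := fun x y h => by
    apply hi1inj
    apply hRinj
    rw [hRi1, hRi1, h]
  have hTinj : Function.Injective T := fun x y h => by
    apply hi2inj
    apply hRinj
    rw [hRi2, hRi2, h]
  have hT0 : 0 < ‖T‖ := by
    rw [norm_pos_iff]
    rintro rfl
    obtain ⟨x, hx⟩ := exists_ne (0 : H)
    exact hx (hTinj (by simp))
  have hmin1 : min (mval (modulus N)) (mval (modulus T)) / ‖T‖ ≤ mval (modulus N) / ‖T‖ := by
    gcongr; exact min_le_left _ _
  have hmin2 : min (mval (modulus N)) (mval (modulus T)) / ‖T‖ ≤ mval (modulus T) / ‖T‖ := by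
    gcongr; exact min_le_right _ _
  ext l
  constructor
  · rintro ⟨X, hX0, hX⟩
    have hXa : ∀ z, R (X z) = l • X (R z) := fun z => congrArg (fun f => f z) hX
    by_cases h11 : p1 ∘L X ∘L i1 = 0
    swap
    · left
      refine ⟨_, h11, ?_⟩
      ext x
      change N (p1 (X (i1 x))) = l • p1 (X (i1 (N x)))
      rw [← hp1R, hXa, map_smul, hRi1]
    right
    have hl0 : l ≠ 0 := by
      rintro rfl
      apply hX0
      ext1 z
      apply hRinj
      rw [hXa, zero_smul]; simp
    have h21 : p2 ∘L X ∘L i1 = 0 := by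
      have hdense : DenseRange (l • N) := by
        have h1 : DenseRange N := by
          have hk : N.range.topologicalClosure = ⊤ := by
            rw [Submodule.topologicalClosure_eq_top_iff, orthogonal_range]
            rw [eq_bot_iff]
            intro x hx
            have hx' : adjoint N x = 0 := hx
            have h2 : N (adjoint N x) = adjoint N (N x) :=
              (congrArg (fun f => f x) hN).symm
            rw [hx', map_zero] at h2
            have h3 : ‖N x‖ ^ 2 = 0 := by
              rw [norm_sq_eq, mulap, ← h2]; simp
            have h4 : N x = 0 := by simpa using h3
            exact hNinj (by rw [h4, map_zero])
          have := (Submodule.dense_iff_topologicalClosure_eq_top).2 hk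
          exact this
        have h2 : (⇑(l • N)) = (fun x => l • x) ∘ N := rfl
        rw [h2]
        exact ((Homeomorph.smulOfNeZero l hl0).surjective.denseRange).comp h1
          (continuous_const_smul l)
      refine no_normal_to_pure hTqn hTpure hdense ?_
      ext x
      change T (p2 (X (i1 x))) = p2 (X (i1 (l • N x)))
      rw [← hp2R, hXa, map_smul, hRi1, map_smul, map_smul, map_smul]
    by_cases h12 : p1 ∘L X ∘L i2 = 0
    · have h22 : p2 ∘L X ∘L i2 ≠ 0 := by
        intro h22
        apply hX0
        ext1 z
        have a11 : p1 (X (i1 (p1 z))) = 0 := congrArg (fun f => f (p1 z)) h11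
        have a21 : p2 (X (i1 (p1 z))) = 0 := congrArg (fun f => f (p1 z)) h21
        have a12 : p1 (X (i2 (p2 z))) = 0 := congrArg (fun f => f (p2 z)) h12
        have a22 : p2 (X (i2 (p2 z))) = 0 := congrArg (fun f => f (p2 z)) h22
        rw [← hdec (X z), ← hdec z]
        simp only [map_add, a11, a21, a12, a22]
        simp only [← map_add, hdec]
        simp
      have h := necessity hTqn hTqn hTinj hT0 h22 (l := l) (by
        ext x
        change T (p2 (X (i2 x))) = l • p2 (X (i2 (T x)))
        rw [← hp2R, hXa, map_smul, hRi2])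
      rcases h with h | ⟨h, e1, e2⟩
      · exact hmin2.trans_lt h
      · rw [Set.mem_ofPred_eq]
        rw [← h]
        rcases lt_trichotomy (mval (modulus N)) (mval (modulus T)) with hlt | heq | hgt
        · rw [min_eq_left hlt.le]; gcongr
        · exact absurd (Or.inr (Or.inl ⟨heq, Or.inr ⟨e1, e2⟩⟩)) hcase
        · exact absurd (Or.inr (Or.inr ⟨hgt, e1, e2⟩)) hcase
    · have h := necessity hNqn hTqn hNinj hT0 h12 (l := l) (by
        ext x
        change N (p1 (X (i2 x))) = l • p1 (X (i2 (T x)))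
        rw [← hp1R, hXa, map_smul, hRi2])
      rcases h with h | ⟨h, e1, e2⟩
      · exact hmin1.trans_lt h
      · rw [Set.mem_ofPred_eq]
        rw [← h]
        rcases lt_trichotomy (mval (modulus N)) (mval (modulus T)) with hlt | heq | hgt
        · exact absurd (Or.inl ⟨hlt, e1, e2⟩) hcase
        · exact absurd (Or.inr (Or.inl ⟨heq, Or.inl ⟨e1, e2⟩⟩)) hcase
        · rw [min_eq_right hgt.le]; gcongr
  · rintro (⟨X, hX0, hX⟩ | hl)
    · have hXa : ∀ z, N (X z) = l • X (N z) := fun z => congrArg (fun f => f z) hX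
      refine ⟨i1 ∘L X ∘L p1, ?_, ?_⟩
      · intro h0
        apply hX0
        ext x
        have : i1 (X (p1 (i1 x))) = 0 := congrArg (fun f => f (i1 x)) h0
        rw [hp1i1] at this
        exact hi1inj (by rw [this, zero_apply, map_zero])
      · ext1 z
        change R (i1 (X (p1 z))) = l • i1 (X (p1 (R z)))
        rw [hRi1, hXa, map_smul, hp1R]
    · rw [Set.mem_ofPred_eq] at hl
      rcases le_total (mval (modulus N)) (mval (modulus T)) with h | h
      · rw [min_eq_left h] at hl
        obtain ⟨X, hX0, hX⟩ := sufficiency hNqn hTqn hTpure hT0 hl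
        have hXa : ∀ z, N (X z) = l • X (T z) := fun z => congrArg (fun f => f z) hX
        refine ⟨i1 ∘L X ∘L p2, ?_, ?_⟩
        · intro h0
          apply hX0
          ext x
          have : i1 (X (p2 (i2 x))) = 0 := congrArg (fun f => f (i2 x)) h0
          rw [hp2i2] at this
          exact hi1inj (by rw [this, zero_apply, map_zero])
        · ext1 z
          change R (i1 (X (p2 z))) = l • i1 (X (p2 (R z)))
          rw [hRi1, hXa, map_smul, hp2R]
      · rw [min_eq_right h] at hl
        obtain ⟨X, hX0, hX⟩ := sufficiency hTqn hTqn hTpure hT0 hl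
        have hXa : ∀ z, T (X z) = l • X (T z) := fun z => congrArg (fun f => f z) hX
        refine ⟨i2 ∘L X ∘L p2, ?_, ?_⟩
        · intro h0
          apply hX0
          ext x
          have : i2 (X (p2 (i2 x))) = 0 := congrArg (fun f => f (i2 x)) h0
          rw [hp2i2] at this
          exact hi2inj (by rw [this, zero_apply, map_zero])
        · ext1 z
          change R (i2 (X (p2 z))) = l • i2 (X (p2 (R z)))
          rw [hRi2, hXa, map_smul, hp2R]
end

section
/- Let 𝔏 be a complex Hilbert space, A an injective positive bounded operator on 𝔏, λ a nonzero complex number, and ι : ℓ²(ℕ,𝔏) → ℓ²(ℤ,𝔏) the canonical isometric embedding (extending a sequence by 0 on negative indices). Then for a bounded operator X on ℓ²(ℕ,𝔏) the following are equivalent: (1) there exists a bounded operator X̂ on ℓ²(ℤ,𝔏) with X̂∘ι = ι∘X and (A⊗U)∘X̂ = λ·(X̂∘(A⊗U)); (2) (A⊗I)∘X = |λ|·(X∘(A⊗I)) and (I⊗S)∘X = (λ/|λ|)·(X∘(I⊗S)), where A⊗I is the operator on ℓ²(ℕ,𝔏) given by ((A⊗I)x)ₙ = A xₙ and I⊗S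 is the shift ((I⊗S)x)₀ = 0, ((I⊗S)x)ₙ₊₁ = xₙ. -/
open ContinuousLinearMap

open ContinuousLinearMap Filter Topology


section abs
variable {H K : Type*} [NormedAddCommGroup H] [InnerProductSpace ℂ H] [CompleteSpace H]
  [NormedAddCommGroup K] [InnerProductSpace ℂ K] [CompleteSpace K]

lemma sqrt_intertwine (B Y : H →L[ℂ] H) (hB : 0 ≤ B) (hinj : Function.Injective B)
    (c : ℝ) (hc : 0 < c) (h : B * (B * Y) = ((c : ℂ) ^ 2) • (Y * (B * B))) :
    B * Y = (c : ℂ) • (Y * B) := by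
  set Z := B * Y - (c : ℂ) • (Y * B) with hZ
  have hc0 : (c : ℂ) ≠ 0 := by exact_mod_cast hc.ne'
  have hBs : star B = B := hB.isSelfAdjoint
  have h1 : B * Z = -((c : ℂ) • (Z * B)) := by
    rw [hZ, mul_sub, h]
    simp only [sub_mul, smul_mul_assoc, mul_smul_comm, smul_sub, smul_smul, mul_assoc, pow_two]
    abel
  have hP : 0 ≤ star Z * B * Z := star_left_conjugate_nonneg hB Z
  have hQ : 0 ≤ star Z * Z := star_mul_self_nonneg Z
  have h2 : star Z * B * Z = -((c : ℂ) • (star Z * Z * B)) := by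
    rw [mul_assoc, h1]; simp [mul_assoc]
  have h3 : star Z * Z * B = -((c : ℂ)⁻¹ • (star Z * B * Z)) := by
    rw [h2, smul_neg, neg_neg, smul_smul, inv_mul_cancel₀ hc0, one_smul]
  have hcomm : Commute (star Z * Z) B := by
    have h4 : star (star Z * Z * B) = star Z * Z * B := by
      rw [h3]
      simp [hBs, mul_assoc]
    rw [star_mul, star_mul, star_star, hBs] at h4
    exact h4.symm
  have h5 : 0 ≤ star Z * Z * B := hcomm.mul_nonneg hQ hB
  have h6 : star Z * Z * B = 0 := by
    apply le_antisymm _ h5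
    rw [h3]
    have : (0 : H →L[ℂ] H) ≤ (c : ℂ)⁻¹ • (star Z * B * Z) := by
      have := smul_nonneg (inv_nonneg.2 hc.le) hP
      convert this using 1
      ext x
      simp only [smul_apply]
      rw [← Complex.ofReal_inv, Complex.coe_smul]
    simpa using this
  have h7 : B * (star Z * Z) = 0 := by rw [← hcomm.eq, h6]
  have h8 : star Z * Z = 0 := by
    ext x
    apply hinj
    simpa using DFunLike.congr_fun h7 x
  have h9 : Z = 0 := CStarRing.star_mul_self_eq_zero_iff Z |>.1 h8
  exact sub_eq_zero.1 h9

lemma forward_abs (C : H →L[ℂ] H) (hC : 0 ≤ C) (hinj : Function.Injective C)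
    (U Y : H →L[ℂ] H) (hU : U ∈ unitary (H →L[ℂ] H)) (hUC : Commute U C)
    (l : ℂ) (hl : l ≠ 0) (h : C * U * Y = l • (Y * (C * U))) :
    C * Y = (‖l‖ : ℂ) • (Y * C) ∧ U * Y = (l / (‖l‖ : ℂ)) • (Y * U) := by
  have hCs : star C = C := hC.isSelfAdjoint
  have hUs := Unitary.star_mul_self_of_mem hU
  have hUs' := Unitary.mul_star_self_of_mem hU
  have hUC' : star U * C = C * star U := by
    calc star U * C = star U * (C * U) * star U := by
          rw [mul_assoc, mul_assoc, hUs', mul_one]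
      _ = C * star U := by rw [← hUC.eq, ← mul_assoc, hUs, one_mul]
  have n0 : star (C * U) * (C * U) = C * C := by
    rw [star_mul, hCs, hUC', mul_assoc, ← hUC.eq, ← mul_assoc (star U), hUs, one_mul]
  have n1 : (C * U) * star (C * U) = C * C := by
    rw [star_mul, hCs, mul_assoc, ← mul_assoc U, hUs', one_mul]
  have hn : IsStarNormal (C * U) := ⟨by rw [commute_iff_eq, n0, n1]⟩
  have hn' : IsStarNormal (l • (C * U)) := ⟨by
    rw [commute_iff_eq, star_smul, smul_mul_smul_comm, smul_mul_smul_comm, n0, n1, mul_comm]⟩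
  have hF : SemiconjBy Y (l • (C * U)) (C * U) := by
    rw [SemiconjBy, h, mul_smul_comm]
  have hF' := (hF.star_right hn' hn).eq
  have hl0 : (‖l‖ : ℂ) ≠ 0 := by simpa using hl
  have h1 : C * Y = (‖l‖ : ℂ) • (Y * C) := by
    apply sqrt_intertwine C Y hC hinj _ (norm_pos_iff.2 hl)
    calc C * (C * Y) = star (C * U) * (C * U * Y) := by rw [← mul_assoc, ← n0, mul_assoc]
      _ = l • ((star (C * U) * Y) * (C * U)) := by rw [h, mul_smul_comm, mul_assoc]
      _ = (l * star l) • (Y * (star (C * U) * (C * U))) := by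
          rw [← hF', star_smul, mul_smul_comm, smul_mul_assoc, smul_smul, mul_assoc]
      _ = _ := by
          rw [n0]; congr 1
          exact RCLike.mul_conj l
  refine ⟨h1, ?_⟩
  have h2 : C * (U * Y) = C * ((l / (‖l‖ : ℂ)) • (Y * U)) := by
    rw [← mul_assoc, h, mul_smul_comm, ← mul_assoc, ← mul_assoc, h1, smul_mul_assoc, smul_smul,
      div_mul_cancel₀ _ hl0]
  ext x
  apply hinj
  simpa using DFunLike.congr_fun h2 x

lemma backward_abs (ι : K →ₗᵢ[ℂ] H) (V : H ≃ₗᵢ[ℂ] H) (S X : K →L[ℂ] K)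
    (hS : ∀ s, V (ι (S s)) = ι s)
    (hd : ∀ v : H, ∀ ε > 0, ∃ (n : ℕ) (s : K), ‖v - (V ^ n) (ι s)‖ < ε)
    (μ : ℂ) (hμ : ‖μ‖ = 1) (hX : ∀ s, S (X s) = μ • X (S s)) :
    ∃ Y : H →L[ℂ] H, ∀ (n : ℕ) (s : K), Y ((V ^ n) (ι s)) = μ ^ n • (V ^ n) (ι (X s)) := by
  let Q : ℕ → H →L[ℂ] H := fun n => μ ^ n •
    (((V ^ n : H ≃ₗᵢ[ℂ] H) : H →L[ℂ] H) ∘L ι.toContinuousLinearMap ∘L X ∘L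
      adjoint ι.toContinuousLinearMap ∘L ((V ^ n).symm : H →L[ℂ] H))
  have hQ : ∀ n v, Q n v = μ ^ n • (V ^ n) (ι (X (adjoint ι.toContinuousLinearMap
      ((V ^ n).symm v)))) := fun n v => rfl
  have hadj : ∀ s, adjoint ι.toContinuousLinearMap (ι s) = s := by
    intro s
    apply ext_inner_right ℂ
    intro t
    rw [adjoint_inner_left]
    exact ι.inner_map_map s t
  have hadjn : ‖adjoint ι.toContinuousLinearMap‖ ≤ 1 := by
    rw [(adjoint (𝕜 := ℂ) (E := K) (F := H)).norm_map]
    exact ι.norm_toContinuousLinearMap_le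
  have hbd : ∀ n v, ‖Q n v‖ ≤ ‖X‖ * ‖v‖ := by
    intro n v
    rw [hQ, norm_smul, norm_pow, hμ, one_pow, one_mul, LinearIsometryEquiv.norm_map,
      LinearIsometry.norm_map]
    refine (X.le_opNorm _).trans ?_
    gcongr
    refine (ContinuousLinearMap.le_opNorm _ _).trans ?_
    rw [(V ^ n).symm.norm_map v]
    exact mul_le_of_le_one_left (norm_nonneg v) hadjn
  have hpow : ∀ (k n : ℕ) (s : K), (V ^ n) (ι s) = (V ^ (n + k)) (ι ((S ^ k) s)) := by
    intro k
    induction k with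
    | zero => intro n s; simp
    | succ k ih =>
      intro n s
      rw [ih, ← hS, ← add_assoc, pow_succ V, pow_succ' S]
      rfl
  have hXp : ∀ (k : ℕ) (s : K), (S ^ k) (X s) = μ ^ k • X ((S ^ k) s) := by
    intro k
    induction k with
    | zero => intro s; simp
    | succ k ih =>
      intro s
      rw [pow_succ' S]
      change S ((S ^ k) (X s)) = _ • X (S ((S ^ k) s))
      rw [ih, map_smul, hX, smul_smul, pow_succ]
  have hst0 : ∀ (n : ℕ) (s : K), Q n ((V ^ n) (ι s)) = μ ^ n • (V ^ n) (ι (X s)) := by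
    intro n s
    rw [hQ, LinearIsometryEquiv.symm_apply_apply, hadj]
  have hst : ∀ (n k : ℕ) (s : K), Q (n + k) ((V ^ n) (ι s)) = μ ^ n • (V ^ n) (ι (X s)) := by
    intro n k s
    rw [hpow k n s, hst0, hpow k n (X s), hXp, map_smul, map_smul, smul_smul, pow_add]
  have hev : ∀ (n : ℕ) (s : K), ∀ m ≥ n, Q m ((V ^ n) (ι s)) = μ ^ n • (V ^ n) (ι (X s)) := by
    intro n s m hm
    obtain ⟨k, rfl⟩ := Nat.exists_eq_add_of_le hm
    exact hst n k s
  have hcau : ∀ v, CauchySeq (fun n => Q n v) := by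
    intro v
    rw [Metric.cauchySeq_iff']
    intro ε hε
    obtain ⟨n, s, hns⟩ := hd v (ε / (2 * (‖X‖ + 1))) (by positivity)
    refine ⟨n, fun m hm => ?_⟩
    set w := (V ^ n) (ι s)
    have e : Q m v - Q n v = Q m (v - w) - Q n (v - w) := by
      rw [map_sub, map_sub, hev n s m hm, hev n s n le_rfl]; abel
    rw [dist_eq_norm, e]
    have hX0 : 0 < ‖X‖ + 1 := by positivity
    calc _ ≤ ‖Q m (v - w)‖ + ‖Q n (v - w)‖ := norm_sub_le _ _
      _ ≤ ‖X‖ * ‖v - w‖ + ‖X‖ * ‖v - w‖ := add_le_add (hbd _ _) (hbd _ _)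
      _ ≤ 2 * (‖X‖ + 1) * ‖v - w‖ := by nlinarith [norm_nonneg (v - w)]
      _ < ε := by rwa [lt_div_iff₀' (by positivity)] at hns
  choose f hf using fun v => cauchySeq_tendsto_of_complete (hcau v)
  refine ⟨continuousLinearMapOfTendsto Q (f := f) (tendsto_pi_nhds.2 hf), ?_⟩
  intro n s
  change f _ = _
  refine tendsto_nhds_unique (hf _) (tendsto_const_nhds.congr' ?_)
  filter_upwards [eventually_ge_atTop n] with m hm
  exact (hev n s m hm).symm
end abs

section conc
variable {𝔏 : Type*} [NormedAddCommGroup 𝔏] [InnerProductSpace ℂ 𝔏]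

lemma shift_mem (k : ℤ) (x : lp (fun _ : ℤ => 𝔏) 2) :
    Memℓp (fun n : ℤ => (x (n + k) : 𝔏)) 2 := by
  apply memℓp_gen
  exact (Equiv.addRight k).summable_iff.2 ((lp.memℓp x).summable (by norm_num))

/-- The backward bilateral shift. -/
noncomputable def backShift : lp (fun _ : ℤ => 𝔏) 2 ≃ₗᵢ[ℂ] lp (fun _ : ℤ => 𝔏) 2 where
  toFun x := ⟨fun n => x (n + 1), shift_mem 1 x⟩
  invFun x := ⟨fun n => x (n + (-1)), shift_mem (-1) x⟩
  map_add' x y := rfl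
  map_smul' c x := rfl
  left_inv x := by ext n; simp
  right_inv x := by ext n; simp
  norm_map' x := by
    have h2 : (0 : ℝ) < (2 : ENNReal).toReal := by norm_num
    have := lp.norm_rpow_eq_tsum h2 x
    refine (Real.rpow_left_inj (norm_nonneg _) (norm_nonneg _) h2.ne').1 ?_
    rw [lp.norm_rpow_eq_tsum h2, lp.norm_rpow_eq_tsum h2]
    exact (Equiv.addRight (1 : ℤ)).tsum_eq (fun i => ‖x i‖ ^ (2 : ENNReal).toReal)

lemma backShift_apply (x : lp (fun _ : ℤ => 𝔏) 2) (n : ℤ) : (backShift x) n = x (n + 1) := rfl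

lemma backShift_symm_apply (x : lp (fun _ : ℤ => 𝔏) 2) (n : ℤ) :
    (backShift.symm x) n = x (n - 1) := rfl

lemma backShift_pow_apply (k : ℕ) (x : lp (fun _ : ℤ => 𝔏) 2) (n : ℤ) :
    ((backShift ^ k) x) n = x (n + k) := by
  induction k generalizing n with
  | zero => simp
  | succ k ih =>
    rw [pow_succ']
    change (backShift ((backShift ^ k) x)) n = _
    rw [backShift_apply, ih]
    rw [show n + ((k + 1 : ℕ) : ℤ) = n + 1 + k by push_cast; ring]

lemma dense_conc (ι : lp (fun _ : ℕ => 𝔏) 2 →ₗᵢ[ℂ] lp (fun _ : ℤ => 𝔏) 2)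
    (hι₁ : ∀ (x : lp (fun _ : ℕ => 𝔏) 2) (n : ℕ), (ι x) (n : ℤ) = x n)
    (hι₂ : ∀ (x : lp (fun _ : ℕ => 𝔏) 2) (m : ℤ), m < 0 → (ι x) m = 0)
    (v : lp (fun _ : ℤ => 𝔏) 2) (ε : ℝ) (hε : 0 < ε) :
    ∃ (n : ℕ) (s : lp (fun _ : ℕ => 𝔏) 2), ‖v - (backShift ^ n) (ι s)‖ < ε := by
  have h := lp.hasSum_single (p := 2) (by norm_num) v
  obtain ⟨F, hF⟩ := (Metric.tendsto_nhds.1 h ε hε).exists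
  rw [dist_comm, dist_eq_norm] at hF
  obtain ⟨n, hn⟩ : ∃ n : ℕ, ∀ i ∈ F, 0 ≤ i + n := by
    refine ⟨∑ i ∈ F, i.natAbs, fun i hi => ?_⟩
    have := Finset.single_le_sum (f := fun i : ℤ => i.natAbs) (fun _ _ => Nat.zero_le _) hi
    omega
  refine ⟨n, ∑ i ∈ F, lp.single 2 (i + n).toNat (v i), ?_⟩
  refine lt_of_eq_of_lt ?_ hF
  congr 2
  rw [map_sum, map_sum]
  refine Finset.sum_congr rfl fun i hi => ?_
  ext j
  rw [backShift_pow_apply]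
  have hi0 := hn i hi
  rcases lt_or_ge (j + n) 0 with hj | hj
  · rw [hι₂ _ _ hj, lp.single_apply_ne]
    omega
  · obtain ⟨k, hk⟩ := Int.eq_ofNat_of_zero_le hj
    rw [hk, hι₁]
    by_cases hij : j = i
    · subst hij
      have : (j + n).toNat = k := by omega
      rw [this, lp.single_apply_self, lp.single_apply_self]
    · rw [lp.single_apply_ne _ _ _ hij, lp.single_apply_ne]
      omega
end conc

theorem lifting_to_bilateral_iff
    {𝔏 : Type*} [NormedAddCommGroup 𝔏] [InnerProductSpace ℂ 𝔏] [CompleteSpace 𝔏]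
    (A : 𝔏 →L[ℂ] 𝔏) (hAinj : Function.Injective A) (hApos : A.IsPositive)
    (l : ℂ) (hl : l ≠ 0)
    (ι : lp (fun _ : ℕ => 𝔏) 2 →ₗᵢ[ℂ] lp (fun _ : ℤ => 𝔏) 2)
    (hι₁ : ∀ (x : lp (fun _ : ℕ => 𝔏) 2) (n : ℕ), (ι x) (n : ℤ) = x n)
    (hι₂ : ∀ (x : lp (fun _ : ℕ => 𝔏) 2) (m : ℤ), m < 0 → (ι x) m = 0)
    (AU : lp (fun _ : ℤ => 𝔏) 2 →L[ℂ] lp (fun _ : ℤ => 𝔏) 2)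
    (hAU : ∀ (x : lp (fun _ : ℤ => 𝔏) 2) (n : ℤ), (AU x) n = A (x (n - 1)))
    (AI : lp (fun _ : ℕ => 𝔏) 2 →L[ℂ] lp (fun _ : ℕ => 𝔏) 2)
    (hAI : ∀ (x : lp (fun _ : ℕ => 𝔏) 2) (n : ℕ), (AI x) n = A (x n))
    (IS : lp (fun _ : ℕ => 𝔏) 2 →L[ℂ] lp (fun _ : ℕ => 𝔏) 2)
    (hIS : ∀ x : lp (fun _ : ℕ => 𝔏) 2, (IS x) 0 = 0 ∧ ∀ n : ℕ, (IS x) (n + 1) = x n)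
    (X : lp (fun _ : ℕ => 𝔏) 2 →L[ℂ] lp (fun _ : ℕ => 𝔏) 2) :
    (∃ Xhat : lp (fun _ : ℤ => 𝔏) 2 →L[ℂ] lp (fun _ : ℤ => 𝔏) 2,
        (∀ v, Xhat (ι v) = ι (X v)) ∧ AU ∘L Xhat = l • (Xhat ∘L AU)) ↔
      (AI ∘L X = (‖l‖ : ℂ) • (X ∘L AI) ∧
        IS ∘L X = (l / (‖l‖ : ℂ)) • (X ∘L IS)) := by
  have hl0 : (‖l‖ : ℂ) ≠ 0 := by simpa using hl
  -- `U ι = ι S`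
  have hS : ∀ s, backShift (ι (IS s)) = ι s := by
    intro s
    ext j
    rw [backShift_apply]
    rcases lt_or_ge j 0 with hj | hj
    · rw [hι₂ _ _ hj]
      rcases lt_or_ge (j + 1) 0 with hj' | hj'
      · rw [hι₂ _ _ hj']
      · have : j + 1 = ((0 : ℕ) : ℤ) := by simp; omega
        rw [this, hι₁, (hIS s).1]
    · obtain ⟨k, rfl⟩ := Int.eq_ofNat_of_zero_le hj
      have : (k : ℤ) + 1 = ((k + 1 : ℕ) : ℤ) := by push_cast; rfl
      rw [this, hι₁, (hIS s).2, hι₁]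
  have hS' : ∀ s, backShift.symm (ι s) = ι (IS s) := by
    intro s
    rw [← hS, LinearIsometryEquiv.symm_apply_apply]
  let C : lp (fun _ : ℤ => 𝔏) 2 →L[ℂ] lp (fun _ : ℤ => 𝔏) 2 :=
    AU ∘L (backShift : lp (fun _ : ℤ => 𝔏) 2 ≃ₗᵢ[ℂ] lp (fun _ : ℤ => 𝔏) 2)
  have hCa : ∀ x n, (C x) n = A (x n) := by
    intro x n
    change (AU (backShift x)) n = _
    rw [hAU, backShift_apply, sub_add_cancel]
  have hAI' : ∀ s, ι (AI s) = C (ι s) := by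
    intro s
    ext j
    rw [hCa]
    rcases lt_or_ge j 0 with hj | hj
    · rw [hι₂ _ _ hj, hι₂ _ _ hj, map_zero]
    · obtain ⟨k, rfl⟩ := Int.eq_ofNat_of_zero_le hj
      rw [hι₁, hι₁, hAI]
  constructor
  · rintro ⟨Y, hY, hYT⟩
    let U : lp (fun _ : ℤ => 𝔏) 2 →L[ℂ] lp (fun _ : ℤ => 𝔏) 2 :=
      (backShift.symm : lp (fun _ : ℤ => 𝔏) 2 ≃ₗᵢ[ℂ] lp (fun _ : ℤ => 𝔏) 2)
    have hUa : ∀ x, U x = backShift.symm x := fun x => rfl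
    have hCU : C * U = AU := by
      ext1 x
      change AU (backShift (backShift.symm x)) = _
      rw [LinearIsometryEquiv.apply_symm_apply]
    have hUC : Commute U C := by
      rw [commute_iff_eq]
      ext x n
      change (U (C x)) n = (C (U x)) n
      rw [hCa, hUa, hUa, backShift_symm_apply, backShift_symm_apply, hCa]
    have hCpos : 0 ≤ C := by
      rw [ContinuousLinearMap.nonneg_iff_isPositive, ContinuousLinearMap.isPositive_def]
      rw [ContinuousLinearMap.isPositive_def] at hApos
      refine ⟨fun x y => ?_, fun x => ?_⟩
      · refine (lp.hasSum_inner (𝕜 := ℂ) (C x) y).unique ?_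
        refine HasSum.congr_fun (lp.hasSum_inner (𝕜 := ℂ) x (C y)) fun n => ?_
        rw [hCa, hCa]
        exact hApos.1 _ _
      · have h1 := lp.hasSum_inner (𝕜 := ℂ) (C x) x
        have h2 := h1.mapL Complex.reCLM
        refine h2.nonneg fun n => ?_
        have := hApos.2 (x n)
        rw [hCa]
        exact this
    have hCinj : Function.Injective C := by
      intro x y hxy
      ext n
      apply hAinj
      rw [← hCa, ← hCa, hxy]
    have hU : U ∈ unitary (lp (fun _ : ℤ => 𝔏) 2 →L[ℂ] lp (fun _ : ℤ => 𝔏) 2) := by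
      have hadj : star U =
          ((backShift : lp (fun _ : ℤ => 𝔏) 2 ≃ₗᵢ[ℂ] lp (fun _ : ℤ => 𝔏) 2) :
            lp (fun _ : ℤ => 𝔏) 2 →L[ℂ] lp (fun _ : ℤ => 𝔏) 2) := by
        rw [ContinuousLinearMap.star_eq_adjoint]
        symm
        rw [ContinuousLinearMap.eq_adjoint_iff]
        intro x y
        change inner ℂ (backShift x) y = inner ℂ x (backShift.symm y)
        rw [← backShift.inner_map_map x, LinearIsometryEquiv.apply_symm_apply]
      rw [Unitary.mem_iff, hadj]
      constructor
      · ext1 x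
        exact backShift.apply_symm_apply x
      · ext1 x
        exact backShift.symm_apply_apply x
    obtain ⟨h1, h2⟩ := forward_abs C hCpos hCinj U Y hU hUC l hl (by rw [hCU]; exact hYT)
    constructor
    · ext1 s
      apply ι.injective
      have := DFunLike.congr_fun h1 (ι s)
      change C (Y (ι s)) = (‖l‖ : ℂ) • Y (C (ι s)) at this
      change ι (AI (X s)) = ι ((‖l‖ : ℂ) • X (AI s))
      rw [hAI', ← hY, this, map_smul, ← hY, hAI']
    · ext1 s
      apply ι.injective
      have := DFunLike.congr_fun h2 (ι s)
      change U (Y (ι s)) = (l / (‖l‖ : ℂ)) • Y (U (ι s)) at this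
      rw [hUa, hUa, hY, hS', hS', hY] at this
      change ι (IS (X s)) = ι ((l / (‖l‖ : ℂ)) • X (IS s))
      rw [this, map_smul]
  · rintro ⟨h1, h2⟩
    have h1' : ∀ s, AI (X s) = (‖l‖ : ℂ) • X (AI s) := fun s => DFunLike.congr_fun h1 s
    have h2' : ∀ s, IS (X s) = (l / (‖l‖ : ℂ)) • X (IS s) := fun s => DFunLike.congr_fun h2 s
    obtain ⟨Y, hY⟩ := backward_abs ι backShift IS X hS
      (fun v ε hε => dense_conc ι hι₁ hι₂ v ε hε) (l / (‖l‖ : ℂ)) (by simp [hl]) h2'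
    refine ⟨Y, fun v => by simpa using hY 0 v, ?_⟩
    have hAUs : ∀ n s, AU ((backShift ^ n) (ι s)) = (backShift ^ n) (ι (AI (IS s))) := by
      intro n s
      rw [hAI', ← hS']
      ext j
      rw [hAU, backShift_pow_apply, backShift_pow_apply, hCa, backShift_symm_apply]
      rw [show j - 1 + (n : ℤ) = j + n - 1 by ring]
    have hdense : DenseRange (fun p : ℕ × lp (fun _ : ℕ => 𝔏) 2 => (backShift ^ p.1) (ι p.2)) := by
      rw [Metric.denseRange_iff]
      intro v ε hε
      obtain ⟨n, s, h⟩ := dense_conc ι hι₁ hι₂ v ε hε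
      exact ⟨(n, s), by rwa [dist_eq_norm]⟩
    apply DFunLike.coe_injective
    refine hdense.equalizer (ContinuousLinearMap.continuous _) (ContinuousLinearMap.continuous _) ?_
    funext ⟨n, s⟩
    change AU (Y ((backShift ^ n) (ι s))) = l • Y (AU ((backShift ^ n) (ι s)))
    rw [hY, map_smul, hAUs, hAUs, hY, h2', map_smul, h1', smul_smul, map_smul, map_smul, smul_smul,
      smul_smul]
    congr 1
    field_simp
end

section
/- Let 𝔏 be a complex Hilbert space, A an invertible positive bounded operator on 𝔏, N = A⊗U on ℓ²(ℤ,𝔏), λ an extended eigenvalue of N, and ι : ℓ²(ℕ,𝔏) → ℓ²(ℤ,𝔏) the canonical isometric embedding (extending a sequence by 0 on negative indices). Then a bounded operator X on ℓ²(ℕ,𝔏) admits a bounded operator X̂ on ℓ²(ℤ,𝔏) with X̂∘ι = ι∘X and N∘X̂ = λ·(X̂∘N) if and only if X belongs to the closure, in the weak operator topology of the bounded operators on ℓ²(ℕ,𝔏) (which for convex sets coincides with the weak-* closure), of the linear span of the operators (I⊗Sⁿ)∘D_{A,L,λ} over n ∈ ℕ and bounded operators L on 𝔏 with A∘L = |λ|·(L∘A),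 where I⊗Sⁿ is the n-fold shift ((I⊗Sⁿ)x)_{k+n} = x_k, ((I⊗Sⁿ)x)_j = 0 for j < n, and D_{A,L,λ} is the bounded diagonal operator (D_{A,L,λ}x)ₖ = λ^{-k}·Aᵏ L A^{-k} xₖ. -/
open ContinuousLinearMap

section AuxHelpers

open Filter Topology

theorem aux_exists_wcomp {𝔏 : Type*} [NormedAddCommGroup 𝔏] [InnerProductSpace ℂ 𝔏]
    {α β : Type*} (e : α → β) (he : Function.Injective e) (M : α → 𝔏 →L[ℂ] 𝔏) (C : ℝ)
    (hC : 0 ≤ C) (hM : ∀ a x, ‖M a x‖ ≤ C * ‖x‖) :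
    ∃ T : lp (fun _ : α => 𝔏) 2 →L[ℂ] lp (fun _ : β => 𝔏) 2, ‖T‖ ≤ C ∧
      (∀ x a, (T x) (e a) = M a (x a)) ∧ ∀ x b, (¬ ∃ a, e a = b) → (T x) b = 0 := by
  have h2 : (0 : ℝ) < (2 : ENNReal).toReal := by norm_num
  have ext1 : ∀ (x : α → 𝔏) a, Function.extend e (fun a => M a (x a)) 0 (e a) = M a (x a) :=
    fun x a => he.extend_apply _ _ _
  have ext0 : ∀ (x : α → 𝔏) b, (¬ ∃ a, e a = b) →
      Function.extend e (fun a => M a (x a)) 0 b = 0 :=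
    fun x b hb => Function.extend_apply' _ _ _ hb
  have hsum : ∀ x : lp (fun _ : α => 𝔏) 2,
      Summable (fun a => ‖M a (x a)‖ ^ (2 : ENNReal).toReal) := by
    intro x
    refine Summable.of_nonneg_of_le (fun a => by positivity) (fun a => ?_)
      (((lp.memℓp x).summable h2).mul_left (C ^ (2 : ENNReal).toReal))
    rw [← Real.mul_rpow hC (norm_nonneg _)]
    exact Real.rpow_le_rpow (norm_nonneg _) (hM a _) h2.le
  have hcomp : ∀ x : lp (fun _ : α => 𝔏) 2,
      ((fun b => ‖Function.extend e (fun a => M a (x a)) 0 b‖ ^ (2 : ENNReal).toReal) ∘ e) =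
      (fun a => ‖M a (x a)‖ ^ (2 : ENNReal).toReal) := by
    intro x; funext a; simp only [Function.comp_apply, ext1]
  have hmem : ∀ x : lp (fun _ : α => 𝔏) 2,
      Memℓp (E := fun _ : β => 𝔏) (Function.extend e (fun a => M a (x a)) 0) 2 := by
    intro x
    apply memℓp_gen
    rw [← he.summable_iff, hcomp]
    · exact hsum x
    · intro b hb
      rw [ext0 x b (by simpa using hb)]
      simp
  have hadd : ∀ (x y : lp (fun _ : α => 𝔏) 2) b,
      Function.extend e (fun a => M a ((x + y) a)) (0 : β → 𝔏) b =
      Function.extend e (fun a => M a (x a)) (0 : β → 𝔏) b +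
      Function.extend e (fun a => M a (y a)) (0 : β → 𝔏) b := by
    intro x y b
    by_cases hb : ∃ a, e a = b
    · obtain ⟨a, rfl⟩ := hb
      rw [ext1, ext1, ext1, lp.coeFn_add, Pi.add_apply, map_add]
    · rw [ext0 _ _ hb, ext0 _ _ hb, ext0 _ _ hb, add_zero]
  have hsmul : ∀ (c : ℂ) (y : lp (fun _ : α => 𝔏) 2) b,
      Function.extend e (fun a => M a ((c • y) a)) (0 : β → 𝔏) b =
      c • Function.extend e (fun a => M a (y a)) (0 : β → 𝔏) b := by
    intro c y b
    by_cases hb : ∃ a, e a = b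
    · obtain ⟨a, rfl⟩ := hb
      rw [ext1, ext1, lp.coeFn_smul, Pi.smul_apply, map_smul]
    · rw [ext0 _ _ hb, ext0 _ _ hb, smul_zero]
  let T0 : lp (fun _ : α => 𝔏) 2 →ₗ[ℂ] lp (fun _ : β => 𝔏) 2 :=
    { toFun := fun x => ⟨Function.extend e (fun a => M a (x a)) 0, hmem x⟩
      map_add' := fun x y => lp.ext (funext fun b => hadd x y b)
      map_smul' := fun c y => lp.ext (funext fun b => hsmul c y b) }
  refine ⟨T0.mkContinuous C ?_, LinearMap.mkContinuous_norm_le _ hC _, ?_, ?_⟩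
  · intro x
    refine lp.norm_le_of_tsum_le h2 (by positivity) ?_
    change ∑' b, ‖Function.extend e (fun a => M a (x a)) 0 b‖ ^ (2 : ENNReal).toReal ≤ _
    rw [← he.tsum_eq, ]
    · change ∑' a, ((fun b => ‖Function.extend e (fun a => M a (x a)) 0 b‖ ^
        (2 : ENNReal).toReal) ∘ e) a ≤ _
      rw [hcomp, Real.mul_rpow hC (norm_nonneg _), lp.norm_rpow_eq_tsum h2, ← tsum_mul_left]
      refine Summable.tsum_le_tsum (fun a => ?_) (hsum x)
        (((lp.memℓp x).summable h2).mul_left (C ^ (2 : ENNReal).toReal))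
      rw [← Real.mul_rpow hC (norm_nonneg _)]
      exact Real.rpow_le_rpow (norm_nonneg _) (hM a _) h2.le
    · intro b hb
      by_contra hb'
      apply hb
      change ‖Function.extend e (fun a => M a (x a)) 0 b‖ ^ (2 : ENNReal).toReal = 0
      rw [ext0 x b (by simpa using hb')]
      simp
  · intro x a; exact ext1 x a
  · intro x b hb; exact ext0 x b hb

/-- pointwise limits on singles of uniformly bounded operators -/
theorem aux_limit {𝔏 F : Type*} [NormedAddCommGroup 𝔏] [InnerProductSpace ℂ 𝔏]
    [NormedAddCommGroup F] [InnerProductSpace ℂ F] [CompleteSpace F] [CompleteSpace 𝔏]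
    {α : Type*} [DecidableEq α] (T : ℕ → lp (fun _ : α => 𝔏) 2 →L[ℂ] F) (C : ℝ)
    (hC : ∀ m, ‖T m‖ ≤ C)
    (h : ∀ i a, ∃ y, Tendsto (fun m => T m (lp.single 2 i a)) atTop (𝓝 y)) :
    ∃ G : lp (fun _ : α => 𝔏) 2 →L[ℂ] F, ∀ x, Tendsto (fun m => T m x) atTop (𝓝 (G x)) := by
  have hC0 : 0 ≤ C := (norm_nonneg (T 0)).trans (hC 0)
  have hsum : ∀ (x : lp (fun _ : α => 𝔏) 2) (s : Finset α), ∃ y, Tendsto (fun m => T m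
      (∑ i ∈ s, lp.single 2 i (x i))) atTop (𝓝 y) := by
    intro x s
    choose y hy using h
    refine ⟨∑ i ∈ s, y i (x i), ?_⟩
    simp only [map_sum]
    exact tendsto_finsetSum _ (fun i _ => hy i _)
  have hall : ∀ x, ∃ y, Tendsto (fun m => T m x) atTop (𝓝 y) := by
    intro x
    apply cauchySeq_tendsto_of_complete
    rw [Metric.cauchySeq_iff']
    intro ε hε
    have hx := lp.hasSum_single (E := fun _ : α => 𝔏) (p := 2) (by norm_num) x
    have hd : (0 : ℝ) < ε / (4 * (C + 1)) := by positivity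
    obtain ⟨s, hs⟩ := ((Metric.tendsto_nhds.1 hx) _ hd).exists
    obtain ⟨y, hy⟩ := hsum x s
    obtain ⟨N, hN⟩ := Metric.cauchySeq_iff'.1 hy.cauchySeq (ε / 2) (by positivity)
    refine ⟨N, fun n hn => ?_⟩
    set z := ∑ i ∈ s, lp.single (E := fun _ : α => 𝔏) 2 i (x i)
    have key : ∀ m, ‖T m x - T m z‖ ≤ ε / 4 := by
      intro m
      rw [← map_sub]
      calc ‖T m (x - z)‖ ≤ C * ‖x - z‖ := (T m).le_of_opNorm_le (hC m) _
        _ ≤ (C + 1) * (ε / (4 * (C + 1))) := by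
            rw [dist_comm, dist_eq_norm] at hs
            gcongr
            linarith
        _ = ε / 4 := by field_simp
    have h1 := key n
    have h2 := key N
    have h3 := hN n hn
    rw [dist_eq_norm] at h3 ⊢
    calc ‖T n x - T N x‖ = ‖(T n x - T n z) + (T n z - T N z) - (T N x - T N z)‖ := by
          congr 1; abel
      _ ≤ ‖T n x - T n z‖ + ‖T n z - T N z‖ + ‖T N x - T N z‖ := by
          exact (norm_sub_le _ _).trans (by gcongr; exact norm_add_le _ _)
      _ < ε := by linarith
  choose g hg using hall
  have hg' : Tendsto (fun m x => T m x) atTop (𝓝 g) := tendsto_pi_nhds.2 hg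
  exact ⟨continuousLinearMapOfTendsto T hg', hg⟩

theorem aux_ext_single {𝔏 F : Type*} [NormedAddCommGroup 𝔏] [InnerProductSpace ℂ 𝔏]
    [NormedAddCommGroup F] [InnerProductSpace ℂ F]
    {α : Type*} [DecidableEq α] {S T : lp (fun _ : α => 𝔏) 2 →L[ℂ] F}
    (h : ∀ i a, S (lp.single 2 i a) = T (lp.single 2 i a)) : S = T := by
  apply lp.ext_continuousLinearMap (p := 2) (by norm_num)
  intro i
  ext a
  exact h i a

/-- the square root step -/
theorem aux_sqrt {𝔏 : Type*} [NormedAddCommGroup 𝔏] [InnerProductSpace ℂ 𝔏] [CompleteSpace 𝔏]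
    (A B L : 𝔏 →L[ℂ] 𝔏) (hApos : A.IsPositive) (hAB : A * B = 1) (r : ℝ) (hr : 0 < r)
    (h : A * (A * L) = ((r : ℂ) ^ 2) • (L * (A * A))) : A * L = (r : ℂ) • (L * A) := by
  set D := A * L - (r : ℂ) • (L * A) with hD
  have hA0 : 0 ≤ A := ContinuousLinearMap.nonneg_iff_isPositive A |>.2 hApos
  have hAs : star A = A := hA0.isSelfAdjoint
  have h1 : A * D = -((r : ℂ) • (D * A)) := by
    rw [hD, mul_sub, sub_mul, h]
    simp only [mul_smul_comm, smul_mul_assoc, mul_assoc, smul_sub, smul_smul]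
    rw [neg_sub, sq]
  have h2 : star D * A * D = -((r : ℂ) • (star D * D * A)) := by
    rw [mul_assoc, h1, mul_neg, mul_smul_comm, mul_assoc]
  have hrc : (r : ℂ) ≠ 0 := by exact_mod_cast hr.ne'
  have h3 : star D * D * A = -((r⁻¹ : ℝ) • (star D * A * D)) := by
    rw [h2, smul_neg, neg_neg]
    change _ = (r⁻¹ : ℝ) • ((r : ℝ) • (star D * D * A))
    rw [smul_smul, inv_mul_cancel₀ hr.ne', one_smul]
  have hp : 0 ≤ (r⁻¹ : ℝ) • (star D * A * D) :=
    smul_nonneg (by positivity) (star_left_conjugate_nonneg hA0 D)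
  have hsa : star (star D * D * A) = star D * D * A := by
    rw [h3, star_neg, hp.isSelfAdjoint.star_eq]
  have hcomm : Commute (star D * D) A := by
    have : star (star D * D * A) = A * (star D * D) := by
      rw [star_mul, star_mul, star_star, hAs]
    rw [Commute, SemiconjBy, ← this, hsa]
  have hnn : 0 ≤ star D * D * A := Commute.mul_nonneg (star_mul_self_nonneg D) hA0 hcomm
  have hz : star D * D * A = 0 := by
    apply le_antisymm _ hnn
    rw [h3]
    exact neg_nonpos.2 hp
  have hz2 : star D * D = 0 := by
    have := congrArg (· * B) hz
    simpa [mul_assoc, hAB] using this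
  have hz3 : D = 0 := CStarRing.star_mul_self_eq_zero_iff D |>.1 hz2
  exact sub_eq_zero.1 hz3

theorem aux_fejer {𝔏 : Type*} [NormedAddCommGroup 𝔏] [InnerProductSpace ℂ 𝔏] [CompleteSpace 𝔏]
    (S X : lp (fun _ : ℕ => 𝔏) 2 →L[ℂ] lp (fun _ : ℕ => 𝔏) 2) (N : ℕ) (hN : 0 < N)
    (hX : ∀ j a i, i < j → (X (lp.single 2 j a)) i = 0)
    (hS : ∀ j a i, (N : ℂ) • (S (lp.single 2 j a)) i =
      ((N - (i - j) : ℕ) : ℂ) • (X (lp.single 2 j a)) i) : ‖S‖ ≤ ‖X‖ := by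
  have h2 : (0 : ℝ) < (2 : ENNReal).toReal := by norm_num
  have hNr : (0 : ℝ) < N := by exact_mod_cast hN
  let q : Finset ℕ → lp (fun _ : ℕ => 𝔏) 2 → lp (fun _ : ℕ => 𝔏) 2 := fun s x =>
    ∑ i ∈ s, lp.single 2 i (x i)
  have hq : ∀ s x, ‖q s x‖ ^ 2 = ∑ i ∈ s, ‖x i‖ ^ 2 := by
    intro s x
    have := lp.norm_sum_single (E := fun _ : ℕ => 𝔏) (p := 2) h2 x s
    simpa using this
  have hq' : ∀ (s : Finset ℕ) (x : lp (fun _ : ℕ => 𝔏) 2), ∑ i ∈ s, ‖x i‖ ^ 2 ≤ ‖x‖ ^ 2 := by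
    intro s x
    have := lp.sum_rpow_le_norm_rpow (E := fun _ : ℕ => 𝔏) (p := 2) h2 x s
    simpa using this
  have hexp : ∀ (T : lp (fun _ : ℕ => 𝔏) 2 →L[ℂ] lp (fun _ : ℕ => 𝔏) 2) s x y,
      inner ℂ (q s y) (T (q s x)) =
        ∑ i ∈ s, ∑ j ∈ s, inner ℂ (y i) ((T (lp.single 2 j (x j))) i) := by
    intro T s x y
    simp only [q, map_sum, sum_inner, inner_sum, lp.inner_single_left]
    exact Finset.sum_comm
  -- the finite estimate
  have hfin : ∀ K x y, ‖inner ℂ (q (Finset.range K) y) (S (q (Finset.range K) x))‖ ≤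
      ‖X‖ * ‖x‖ * ‖y‖ := by
    intro K x y
    let s : ℕ → Finset ℕ := fun m => (Finset.range K).filter (fun i => i ≤ m ∧ m < i + N)
    have hcard : ∀ i ∈ Finset.range K, ∀ j ∈ Finset.range K, j ≤ i →
        ((Finset.range (K + N)).filter (fun m => (i ≤ m ∧ m < i + N) ∧ (j ≤ m ∧ m < j + N))).card
          = N - (i - j) := by
      intro i hi j hj hij
      have : (Finset.range (K + N)).filter
          (fun m => (i ≤ m ∧ m < i + N) ∧ (j ≤ m ∧ m < j + N)) = Finset.Ico i (j + N) := by
        ext m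
        simp only [Finset.mem_filter, Finset.mem_range, Finset.mem_Ico] at *
        omega
      rw [this, Nat.card_Ico]
      omega
    have hmain : (N : ℂ) * inner ℂ (q (Finset.range K) y) (S (q (Finset.range K) x)) =
        ∑ m ∈ Finset.range (K + N), inner ℂ (q (s m) y) (X (q (s m) x)) := by
      simp only [hexp]
      have : ∀ m, ∑ i ∈ s m, ∑ j ∈ s m, inner ℂ (y i) ((X (lp.single 2 j (x j))) i) =
          ∑ i ∈ Finset.range K, ∑ j ∈ Finset.range K,
            if (i ≤ m ∧ m < i + N) ∧ (j ≤ m ∧ m < j + N) then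
              inner ℂ (y i) ((X (lp.single 2 j (x j))) i) else 0 := by
        intro m
        simp only [s, Finset.sum_filter]
        refine Finset.sum_congr rfl fun i _ => ?_
        by_cases hi : i ≤ m ∧ m < i + N
        · rw [if_pos hi]
          refine Finset.sum_congr rfl fun j _ => ?_
          simp only [hi, true_and]
        · rw [if_neg hi]
          symm
          refine Finset.sum_eq_zero fun j _ => ?_
          rw [if_neg (fun h => hi h.1)]
      simp only [this]
      symm
      rw [Finset.sum_comm, Finset.mul_sum]
      refine Finset.sum_congr rfl fun i hi => ?_
      rw [Finset.sum_comm, Finset.mul_sum]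
      refine Finset.sum_congr rfl fun j hj => ?_
      rw [← inner_smul_right, hS]
      by_cases hij : i < j
      · rw [hX _ _ _ hij]; simp
      · rw [← Finset.sum_filter, Finset.sum_const, hcard i hi j hj (not_lt.1 hij),
          inner_smul_right, nsmul_eq_mul]
    have hsq : ∀ x, ∑ m ∈ Finset.range (K + N), ‖q (s m) x‖ ^ 2 ≤ N * ‖x‖ ^ 2 := by
      intro x
      calc ∑ m ∈ Finset.range (K + N), ‖q (s m) x‖ ^ 2
          = ∑ i ∈ Finset.range K, (N : ℝ) * ‖x i‖ ^ 2 := by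
            simp only [hq, s, Finset.sum_filter]
            rw [Finset.sum_comm]
            refine Finset.sum_congr rfl fun i hi => ?_
            have := hcard i hi i hi le_rfl
            simp only [and_self, Nat.sub_self, Nat.sub_zero] at this
            rw [← Finset.sum_filter, Finset.sum_const, this, nsmul_eq_mul]
        _ ≤ N * ‖x‖ ^ 2 := by
            rw [← Finset.mul_sum]
            exact mul_le_mul_of_nonneg_left (hq' _ x) hNr.le
    have hb : (N : ℝ) * ‖inner ℂ (q (Finset.range K) y) (S (q (Finset.range K) x))‖ ≤
        N * (‖X‖ * ‖x‖ * ‖y‖) := by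
      calc (N : ℝ) * ‖inner ℂ (q (Finset.range K) y) (S (q (Finset.range K) x))‖
          = ‖∑ m ∈ Finset.range (K + N), inner ℂ (q (s m) y) (X (q (s m) x))‖ := by
            rw [← hmain, norm_mul, Complex.norm_natCast]
        _ ≤ ∑ m ∈ Finset.range (K + N), ‖inner ℂ (q (s m) y) (X (q (s m) x))‖ :=
            norm_sum_le _ _
        _ ≤ ∑ m ∈ Finset.range (K + N), ‖X‖ * (‖q (s m) x‖ * ‖q (s m) y‖) := by
            refine Finset.sum_le_sum fun m _ => ?_
            calc _ ≤ ‖q (s m) y‖ * ‖X (q (s m) x)‖ := norm_inner_le_norm _ _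
              _ ≤ ‖q (s m) y‖ * (‖X‖ * ‖q (s m) x‖) := by
                gcongr
                exact X.le_opNorm _
              _ = _ := by ring
        _ ≤ ‖X‖ * (√(N * ‖x‖ ^ 2) * √(N * ‖y‖ ^ 2)) := by
            rw [← Finset.mul_sum]
            gcongr
            refine (Real.sum_mul_le_sqrt_mul_sqrt _ _ _).trans ?_
            gcongr
            · exact hsq x
            · exact hsq y
        _ = N * (‖X‖ * ‖x‖ * ‖y‖) := by
            rw [Real.sqrt_mul hNr.le, Real.sqrt_mul hNr.le, Real.sqrt_sq (norm_nonneg _),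
              Real.sqrt_sq (norm_nonneg _)]
            have := Real.mul_self_sqrt hNr.le
            calc _ = ‖X‖ * ((√(N : ℝ) * √(N : ℝ)) * (‖x‖ * ‖y‖)) := by ring
              _ = _ := by rw [this]; ring
    exact le_of_mul_le_mul_left hb hNr
  have hlim : ∀ x, Tendsto (fun K => q (Finset.range K) x) atTop (𝓝 x) := fun x =>
    (lp.hasSum_single (E := fun _ : ℕ => 𝔏) (p := 2) (by norm_num) x).tendsto_sum_nat
  have hin : ∀ x y, ‖inner ℂ y (S x)‖ ≤ ‖X‖ * ‖x‖ * ‖y‖ := by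
    intro x y
    refine le_of_tendsto ((hlim y).inner ((S.continuous.tendsto x).comp (hlim x))).norm
      (Eventually.of_forall fun K => ?_)
    exact hfin K x y
  refine S.opNorm_le_bound (norm_nonneg X) fun x => ?_
  have h := hin x (S x)
  rw [inner_self_eq_norm_sq_to_K, norm_pow, RCLike.norm_ofReal, abs_norm] at h
  by_cases h0 : ‖S x‖ = 0
  · rw [h0]; positivity
  · have : 0 < ‖S x‖ := lt_of_le_of_ne (norm_nonneg _) (Ne.symm h0)
    rw [sq] at h
    exact le_of_mul_le_mul_right h this

theorem aux_weak {𝔏 : Type*} [NormedAddCommGroup 𝔏] [InnerProductSpace ℂ 𝔏] [CompleteSpace 𝔏]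
    (S : ℕ → lp (fun _ : ℕ => 𝔏) 2 →L[ℂ] lp (fun _ : ℕ => 𝔏) 2)
    (X : lp (fun _ : ℕ => 𝔏) 2 →L[ℂ] lp (fun _ : ℕ => 𝔏) 2) (C : ℝ) (hC : ∀ n, ‖S n‖ ≤ C)
    (h : ∀ j a i, Tendsto (fun n => (S n (lp.single 2 j a)) i) atTop
      (𝓝 ((X (lp.single 2 j a)) i))) (x w : lp (fun _ : ℕ => 𝔏) 2) :
    Tendsto (fun n => inner ℂ w (S n x)) atTop (𝓝 (inner ℂ w (X x))) := by
  have step1 : ∀ j a (w : lp (fun _ : ℕ => 𝔏) 2),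
      Tendsto (fun n => inner ℂ (S n (lp.single 2 j a)) w) atTop
        (𝓝 (inner ℂ (X (lp.single 2 j a)) w)) := by
    intro j a w
    have hs : ∀ i b, Tendsto (fun n => innerSL ℂ (S n (lp.single 2 j a)) (lp.single 2 i b)) atTop
        (𝓝 (innerSL ℂ (X (lp.single 2 j a)) (lp.single 2 i b))) := by
      intro i b
      simp only [innerSL_apply_apply, lp.inner_single_right]
      exact (h j a i).inner tendsto_const_nhds
    obtain ⟨G, hG⟩ := aux_limit (fun n => innerSL ℂ (S n (lp.single 2 j a)))
      (C * ‖lp.single (E := fun _ : ℕ => 𝔏) 2 j a‖)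
      (fun n => by
        rw [innerSL_apply_norm]
        exact (S n).le_of_opNorm_le (hC n) _) (fun i b => ⟨_, hs i b⟩)
    have : G = innerSL ℂ (X (lp.single 2 j a)) :=
      aux_ext_single fun i b => tendsto_nhds_unique (hG _) (hs i b)
    have h' := hG w
    rw [this] at h'
    exact h'
  have hs : ∀ j a, Tendsto (fun n => (innerSL ℂ w ∘L S n) (lp.single 2 j a)) atTop
      (𝓝 ((innerSL ℂ w ∘L X) (lp.single 2 j a))) := by
    intro j a
    have := (Complex.continuous_conj.tendsto _).comp (step1 j a w)
    simpa [Function.comp_def, inner_conj_symm] using this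
  obtain ⟨G, hG⟩ := aux_limit (fun n => innerSL ℂ w ∘L S n) (‖w‖ * C)
    (fun n => by
      refine (ContinuousLinearMap.opNorm_comp_le _ _).trans ?_
      rw [innerSL_apply_norm]
      gcongr
      exact hC n) (fun i b => ⟨_, hs i b⟩)
  have : G = innerSL ℂ w ∘L X := aux_ext_single fun i b => tendsto_nhds_unique (hG _) (hs i b)
  have h' := hG x
  rw [this] at h'
  exact h'

/-- Twisted lower triangular Toeplitz form of an operator. -/
def AuxForm {𝔏 : Type*} [NormedAddCommGroup 𝔏] [InnerProductSpace ℂ 𝔏]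
    (A : 𝔏 →L[ℂ] 𝔏) (l : ℂ) (X : lp (fun _ : ℕ => 𝔏) 2 →L[ℂ] lp (fun _ : ℕ => 𝔏) 2) : Prop :=
  ∃ L : ℕ → 𝔏 →L[ℂ] 𝔏, (∀ n, A ∘L L n = (‖l‖ : ℂ) • (L n ∘L A)) ∧
    ∀ j a i, (X (lp.single 2 j a)) i = if i < j then 0 else ((‖l‖ : ℂ) / l) ^ j • L (i - j) a

theorem aux_lift_form
    {𝔏 : Type*} [NormedAddCommGroup 𝔏] [InnerProductSpace ℂ 𝔏] [CompleteSpace 𝔏]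
    (A : 𝔏 →L[ℂ] 𝔏) (hApos : A.IsPositive)
    (B : 𝔏 →L[ℂ] 𝔏) (hAB : A ∘L B = 1)
    (ι : lp (fun _ : ℕ => 𝔏) 2 →ₗᵢ[ℂ] lp (fun _ : ℤ => 𝔏) 2)
    (hι₁ : ∀ (x : lp (fun _ : ℕ => 𝔏) 2) (n : ℕ), (ι x) (n : ℤ) = x n)
    (hι₂ : ∀ (x : lp (fun _ : ℕ => 𝔏) 2) (m : ℤ), m < 0 → (ι x) m = 0)
    (AU : lp (fun _ : ℤ => 𝔏) 2 →L[ℂ] lp (fun _ : ℤ => 𝔏) 2)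
    (hAU : ∀ (x : lp (fun _ : ℤ => 𝔏) 2) (n : ℤ), (AU x) n = A (x (n - 1)))
    (l : ℂ) (hl : l ≠ 0)
    (hιs : ∀ (j : ℕ) a, ι (lp.single 2 j a) = lp.single 2 (j : ℤ) a)
    (hAUs : ∀ (j : ℤ) a, AU (lp.single 2 j a) = lp.single 2 (j + 1) (A a))
    (X : lp (fun _ : ℕ => 𝔏) 2 →L[ℂ] lp (fun _ : ℕ => 𝔏) 2)
    (Xhat : lp (fun _ : ℤ => 𝔏) 2 →L[ℂ] lp (fun _ : ℤ => 𝔏) 2)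
    (hX : ∀ v, Xhat (ι v) = ι (X v)) (hN : AU ∘L Xhat = l • (Xhat ∘L AU)) :
    AuxForm A l X := by
  have hA0 : 0 ≤ A := ContinuousLinearMap.nonneg_iff_isPositive A |>.2 hApos
  have hAs : ∀ x y, inner ℂ (A x) y = inner ℂ x (A y) := hApos.isSymmetric
  have hABx : ∀ x, A (B x) = x := fun x => DFunLike.congr_fun hAB x
  have hr : 0 < ‖l‖ := norm_pos_iff.2 hl
  have hadj : ∀ y n, (star AU y) n = A (y (n + 1)) := by
    intro y n
    apply ext_inner_left ℂ
    intro a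
    refine (lp.inner_single_left (𝕜 := ℂ) (G := fun _ : ℤ => 𝔏) n a (star AU y)).symm.trans ?_
    rw [ContinuousLinearMap.star_eq_adjoint,
      ContinuousLinearMap.adjoint_inner_right, hAUs, lp.inner_single_left, hAs]
  have hnn : ∀ x n, ((star AU * AU) x) n = A (A (x n)) := by
    intro x n
    rw [mul_apply_eq_comp, hadj, hAU, add_sub_cancel_right]
  have hnn' : ∀ x n, ((AU * star AU) x) n = A (A (x n)) := by
    intro x n
    rw [mul_apply_eq_comp, hAU, hadj, sub_add_cancel]
  have hnormal : IsStarNormal AU := by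
    refine ⟨?_⟩
    rw [Commute, SemiconjBy]
    ext x n
    rw [hnn, hnn']
  have hnormal' : IsStarNormal (l • AU) := by
    refine ⟨?_⟩
    rw [star_smul]
    exact (hnormal.star_comm_self.smul_left _).smul_right _
  have hsemi : SemiconjBy Xhat (l • AU) AU := by
    rw [SemiconjBy, mul_smul_comm]
    exact hN.symm
  have hsemi' := SemiconjBy.star_right hnormal' hnormal hsemi
  have hfug : star AU * Xhat = star l • (Xhat * star AU) := by
    rw [← hsemi'.eq, star_smul, mul_smul_comm]
  have hsq : star AU * AU * Xhat = ((‖l‖ : ℂ) ^ 2) • (Xhat * (star AU * AU)) := by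
    have hN' : AU * Xhat = l • (Xhat * AU) := hN
    rw [mul_assoc, hN', mul_smul_comm, ← mul_assoc, hfug, smul_mul_assoc, smul_smul, mul_assoc]
    congr 1
    exact Complex.mul_conj' l
  -- entries
  let E : ℤ → ℤ → 𝔏 →L[ℂ] 𝔏 := fun i j =>
    lp.evalCLM ℂ (fun _ : ℤ => 𝔏) 2 i ∘L Xhat ∘L
      lp.singleContinuousLinearMap ℂ (fun _ : ℤ => 𝔏) 2 j
  have hE : ∀ i j a, E i j a = (Xhat (lp.single 2 j a)) i := fun i j a => rfl
  have hEA : ∀ i j, A * E i j = (‖l‖ : ℂ) • (E i j * A) := by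
    intro i j
    apply aux_sqrt A B (E i j) hApos hAB ‖l‖ hr
    ext a
    have h1 : (star AU * AU) (lp.single 2 j a) = lp.single 2 j (A (A a)) := by
      ext n
      rw [hnn, lp.single_apply, lp.single_apply]
      by_cases h : n = j
      · subst h; simp
      · simp [Pi.single_eq_of_ne h]
    have h2 := congrArg (fun z : lp (fun _ : ℤ => 𝔏) 2 => z i)
      (DFunLike.congr_fun hsq (lp.single 2 j a))
    simp only [smul_apply, lp.coeFn_smul, Pi.smul_apply] at h2
    rw [mul_apply_eq_comp, hnn, mul_apply_eq_comp, h1] at h2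
    exact h2
  have hEA' : ∀ i j a, A (E i j a) = (‖l‖ : ℂ) • E i j (A a) := fun i j a =>
    DFunLike.congr_fun (hEA i j) a
  have hrel : ∀ i j a, E (i + 1) (j + 1) a = ((‖l‖ : ℂ) / l) • E i j a := by
    intro i j a
    have h2 := congrArg (fun z : lp (fun _ : ℤ => 𝔏) 2 => z (i + 1))
      (DFunLike.congr_fun hN (lp.single 2 j (B a)))
    simp only [smul_apply, lp.coeFn_smul, Pi.smul_apply,
      ContinuousLinearMap.comp_apply, hAU, hAUs, add_sub_cancel_right, hABx] at h2
    rw [← hE, ← hE, hEA', hABx] at h2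
    rw [div_eq_inv_mul, mul_smul, h2, smul_smul, inv_mul_cancel₀ hl, one_smul]
  have hrel' : ∀ (j : ℕ) (i : ℤ) a, E i j a = ((‖l‖ : ℂ) / l) ^ j • E (i - j) 0 a := by
    intro j
    induction j with
    | zero => intro i a; simp
    | succ j ih =>
      intro i a
      have := hrel (i - 1) j a
      rw [sub_add_cancel] at this
      push_cast
      rw [this, ih, smul_smul, ← pow_succ']
      congr 3
      ring
  have hX0 : ∀ (j : ℕ) a i, E i j a = (ι (X (lp.single 2 j a))) i := by
    intro j a i
    rw [hE, ← hιs, hX]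
  refine ⟨fun n => E n 0, fun n => hEA _ _, ?_⟩
  intro j a i
  rw [← hι₁, ← hX0, hrel']
  split_ifs with hij
  · have h0 : E ((i : ℤ) - j) 0 a = 0 := by
      have := hX0 0 a ((i : ℤ) - j)
      rw [hι₂ _ _ (by omega)] at this
      exact this
    rw [h0, smul_zero]
  · congr 3
    push_cast [Nat.cast_sub (not_lt.1 hij)]
    rfl

theorem aux_form_lift
    {𝔏 : Type*} [NormedAddCommGroup 𝔏] [InnerProductSpace ℂ 𝔏] [CompleteSpace 𝔏]
    (A : 𝔏 →L[ℂ] 𝔏)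
    (ι : lp (fun _ : ℕ => 𝔏) 2 →ₗᵢ[ℂ] lp (fun _ : ℤ => 𝔏) 2)
    (hι₁ : ∀ (x : lp (fun _ : ℕ => 𝔏) 2) (n : ℕ), (ι x) (n : ℤ) = x n)
    (hι₂ : ∀ (x : lp (fun _ : ℕ => 𝔏) 2) (m : ℤ), m < 0 → (ι x) m = 0)
    (AU : lp (fun _ : ℤ => 𝔏) 2 →L[ℂ] lp (fun _ : ℤ => 𝔏) 2)
    (hAU : ∀ (x : lp (fun _ : ℤ => 𝔏) 2) (n : ℤ), (AU x) n = A (x (n - 1)))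
    (l : ℂ) (hl : l ≠ 0)
    (hιs : ∀ (j : ℕ) a, ι (lp.single 2 j a) = lp.single 2 (j : ℤ) a)
    (hAUs : ∀ (j : ℤ) a, AU (lp.single 2 j a) = lp.single 2 (j + 1) (A a))
    (X : lp (fun _ : ℕ => 𝔏) 2 →L[ℂ] lp (fun _ : ℕ => 𝔏) 2)
    (hform : AuxForm A l X) :
    ∃ Xhat : lp (fun _ : ℤ => 𝔏) 2 →L[ℂ] lp (fun _ : ℤ => 𝔏) 2,
        (∀ v, Xhat (ι v) = ι (X v)) ∧ AU ∘L Xhat = l • (Xhat ∘L AU) := by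
  obtain ⟨L, hL, hXL⟩ := hform
  set ω : ℂ := (‖l‖ : ℂ) / l with hω
  have hlc : (‖l‖ : ℂ) ≠ 0 := by exact_mod_cast (norm_pos_iff.2 hl).ne'
  have hω0 : ω ≠ 0 := div_ne_zero hlc hl
  have hω1 : ‖ω‖ = 1 := by
    rw [hω, norm_div, Complex.norm_real, norm_norm, div_self (norm_pos_iff.2 hl).ne']
  have hlω : l * ω = ‖l‖ := by rw [hω]; field_simp
  -- shifts: (V m x) (i - m) = x i
  have hV : ∀ m : ℤ, ∃ V : lp (fun _ : ℤ => 𝔏) 2 →L[ℂ] lp (fun _ : ℤ => 𝔏) 2, ‖V‖ ≤ 1 ∧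
      ∀ x i, (V x) i = x (i + m) := by
    intro m
    obtain ⟨V, h1, h2, -⟩ := aux_exists_wcomp (𝔏 := 𝔏) (fun i : ℤ => i - m)
      (fun i j h => by simpa using h) (fun _ => 1) 1 zero_le_one (by simp)
    refine ⟨V, h1, fun x i => ?_⟩
    have := h2 x (i + m)
    simpa using this
  choose V hV1 hV2 using hV
  have hVs : ∀ m j (a : 𝔏), V m (lp.single 2 j a) = lp.single 2 (j - m) a := by
    intro m j a
    ext i
    rw [hV2, lp.single_apply, lp.single_apply, Pi.single_apply, Pi.single_apply]
    congr 1
    exact propext ⟨fun h => by omega, fun h => by omega⟩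
  let P : lp (fun _ : ℤ => 𝔏) 2 →L[ℂ] lp (fun _ : ℕ => 𝔏) 2 :=
    ContinuousLinearMap.adjoint ι.toContinuousLinearMap
  have hP : ‖P‖ ≤ 1 := by
    rw [show ‖P‖ = ‖ι.toContinuousLinearMap‖ from LinearIsometryEquiv.norm_map _ _]
    exact ι.norm_toContinuousLinearMap_le
  have hPι : ∀ x, P (ι x) = x := by
    intro x
    apply ext_inner_left ℂ
    intro y
    rw [ContinuousLinearMap.adjoint_inner_right]
    exact ι.inner_map_map y x
  have hPs : ∀ (j : ℕ) a, P (lp.single 2 (j : ℤ) a) = lp.single 2 j a := by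
    intro j a; rw [← hιs, hPι]
  let T : ℕ → lp (fun _ : ℤ => 𝔏) 2 →L[ℂ] lp (fun _ : ℤ => 𝔏) 2 := fun m =>
    (ω ^ m)⁻¹ • (V m ∘L ι.toContinuousLinearMap ∘L X ∘L P ∘L V (-m))
  have hT : ∀ m, ‖T m‖ ≤ ‖X‖ := by
    intro m
    refine ContinuousLinearMap.opNorm_le_bound _ (norm_nonneg _) fun x => ?_
    change ‖(ω ^ m)⁻¹ • V m (ι (X (P (V (-m) x))))‖ ≤ _
    rw [norm_smul, norm_inv, norm_pow, hω1, one_pow, inv_one, one_mul]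
    calc ‖V m (ι (X (P (V (-m) x))))‖ ≤ 1 * ‖ι (X (P (V (-m) x)))‖ :=
          (V m).le_of_opNorm_le (hV1 m) _
      _ = ‖X (P (V (-m) x))‖ := by rw [one_mul, ι.norm_map]
      _ ≤ ‖X‖ * ‖P (V (-m) x)‖ := X.le_opNorm _
      _ ≤ ‖X‖ * ‖x‖ := by
          gcongr
          calc _ ≤ 1 * ‖V (-m) x‖ := P.le_of_opNorm_le hP _
            _ ≤ 1 * (1 * ‖x‖) := by
              gcongr
              exact (V (-m)).le_of_opNorm_le (hV1 _) _
            _ = ‖x‖ := by ring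
  have hTs : ∀ (m : ℕ) (j : ℤ) a, 0 ≤ j + m → ∀ i,
      (T m (lp.single 2 j a)) i = if i < j then 0 else ω ^ j • L (i - j).toNat a := by
    intro m j a hj i
    change ((ω ^ m)⁻¹ • V m (ι (X (P (V (-m) (lp.single 2 j a)))))) i = _
    obtain ⟨k, hk⟩ := Int.eq_ofNat_of_zero_le hj
    rw [hVs, sub_neg_eq_add, hk, hPs, lp.coeFn_smul, Pi.smul_apply, hV2]
    by_cases hi : i + m < 0
    · rw [hι₂ _ _ hi, if_pos (by omega), smul_zero]
    · obtain ⟨p, hp⟩ := Int.eq_ofNat_of_zero_le (not_lt.1 hi)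
      rw [hp, hι₁, hXL]
      by_cases hij : i < j
      · rw [if_pos (by omega), if_pos hij, smul_zero]
      · rw [if_neg (by omega), if_neg hij, smul_smul]
        have e1 : p - k = (i - j).toNat := by omega
        have e2 : (ω ^ m)⁻¹ * ω ^ k = ω ^ j := by
          have : j = (k : ℤ) - m := by omega
          rw [this, zpow_sub₀ hω0, zpow_natCast, zpow_natCast]
          field_simp
        rw [e1, e2]
  have hTc : ∀ (m : ℕ) (j : ℤ) a, 0 ≤ j + m →
      T m (lp.single 2 j a) = T j.natAbs (lp.single 2 j a) := by
    intro m j a hj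
    ext i
    rw [hTs m j a hj, hTs _ j a (by omega)]
  have hTt : ∀ (j : ℤ) a, Tendsto (fun m => T m (lp.single 2 j a)) atTop
      (𝓝 (T j.natAbs (lp.single 2 j a))) := by
    intro j a
    refine tendsto_const_nhds.congr' ?_
    filter_upwards [eventually_ge_atTop j.natAbs] with m hm
    exact (hTc m j a (by omega)).symm
  obtain ⟨G, hG⟩ := aux_limit T ‖X‖ hT (fun j a => ⟨_, hTt j a⟩)
  have hGs : ∀ j a, G (lp.single 2 j a) = T j.natAbs (lp.single 2 j a) := fun j a =>
    tendsto_nhds_unique (hG _) (hTt j a)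
  have hGe : ∀ (j : ℤ) a (i : ℤ),
      (G (lp.single 2 j a)) i = if i < j then 0 else ω ^ j • L (i - j).toNat a := by
    intro j a i
    rw [hGs, hTs _ _ _ (by omega)]
  refine ⟨G, ?_, ?_⟩
  · have : G ∘L ι.toContinuousLinearMap = ι.toContinuousLinearMap ∘L X := by
      apply aux_ext_single
      intro j a
      change G (ι (lp.single 2 j a)) = ι (X (lp.single 2 j a))
      ext i
      rw [hιs, hGe]
      by_cases hi : i < 0
      · rw [hι₂ _ _ hi, if_pos (by omega)]
      · obtain ⟨p, rfl⟩ := Int.eq_ofNat_of_zero_le (not_lt.1 hi)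
        rw [hι₁, hXL]
        by_cases hij : p < j
        · rw [if_pos (by omega), if_pos hij]
        · rw [if_neg (by omega), if_neg hij, zpow_natCast]
          congr 3
          omega
    exact fun v => DFunLike.congr_fun this v
  · apply aux_ext_single
    intro j a
    ext i
    rw [smul_apply, lp.coeFn_smul, Pi.smul_apply,
      ContinuousLinearMap.comp_apply, ContinuousLinearMap.comp_apply, hAU, hAUs, hGe, hGe]
    by_cases hij : i < j + 1
    · rw [if_pos (by omega), if_pos hij, map_zero, smul_zero]
    · rw [if_neg (by omega), if_neg hij, map_smul, smul_smul]
      have h1 := DFunLike.congr_fun (hL (i - 1 - j).toNat) a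
      simp only [ContinuousLinearMap.comp_apply, smul_apply] at h1
      rw [h1, smul_smul, zpow_add_one₀ hω0]
      have e1 : (i - 1 - j).toNat = (i - (j + 1)).toNat := by omega
      rw [e1]
      congr 1
      rw [← hlω]; ring

theorem aux_conj_pow
    {𝔏 : Type*} [NormedAddCommGroup 𝔏] [InnerProductSpace ℂ 𝔏]
    (A B L : 𝔏 →L[ℂ] 𝔏) (hAB : A ∘L B = 1) (l : ℂ)
    (hL : A ∘L L = (‖l‖ : ℂ) • (L ∘L A)) (k : ℕ) (a : 𝔏) :
    l ^ (-(k : ℤ)) • (A ^ k) (L ((B ^ k) a)) = ((‖l‖ : ℂ) / l) ^ k • L a := by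
  have hL' : ∀ x, A (L x) = (‖l‖ : ℂ) • L (A x) := fun x => DFunLike.congr_fun hL x
  have hABx : ∀ x, A (B x) = x := fun x => DFunLike.congr_fun hAB x
  have key : ∀ k a, (A ^ k) (L ((B ^ k) a)) = (‖l‖ : ℂ) ^ k • L a := by
    intro k
    induction k with
    | zero => intro a; simp
    | succ k ih =>
      intro a
      rw [pow_succ, pow_succ', mul_apply_eq_comp, mul_apply_eq_comp, hL', hABx, map_smul, ih,
        smul_smul, ← pow_succ']
  rw [key, smul_smul, div_pow, zpow_neg, zpow_natCast]
  congr 1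
  ring

theorem aux_form_closure
    {𝔏 : Type*} [NormedAddCommGroup 𝔏] [InnerProductSpace ℂ 𝔏] [CompleteSpace 𝔏]
    (A : 𝔏 →L[ℂ] 𝔏) (B : 𝔏 →L[ℂ] 𝔏) (hAB : A ∘L B = 1) (l : ℂ) (hl : l ≠ 0)
    (X : lp (fun _ : ℕ => 𝔏) 2 →L[ℂ] lp (fun _ : ℕ => 𝔏) 2)
    (hform : AuxForm A l X) :
      X ∈ ⇑(ContinuousLinearMapWOT.linearEquiv (σ := RingHom.id ℂ)
          (E := lp (fun _ : ℕ => 𝔏) 2) (F := lp (fun _ : ℕ => 𝔏) 2) ℂ).symm ⁻¹'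
        closure (⇑(ContinuousLinearMapWOT.linearEquiv (σ := RingHom.id ℂ)
          (E := lp (fun _ : ℕ => 𝔏) 2) (F := lp (fun _ : ℕ => 𝔏) 2) ℂ).symm ''
          (Submodule.span ℂ
            {X0 : lp (fun _ : ℕ => 𝔏) 2 →L[ℂ] lp (fun _ : ℕ => 𝔏) 2 |
              ∃ (n : ℕ) (L : 𝔏 →L[ℂ] 𝔏), A ∘L L = (‖l‖ : ℂ) • (L ∘L A) ∧
                ∀ x : lp (fun _ : ℕ => 𝔏) 2,
                  (∀ j : ℕ, j < n → (X0 x) j = 0) ∧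
                  ∀ k : ℕ, (X0 x) (k + n) =
                    l ^ (-(k : ℤ)) • (A ^ k) (L ((B ^ k) (x k)))} : Set _)) := by
  obtain ⟨L, hL, hXL⟩ := hform
  have hω1 : ‖(‖l‖ : ℂ) / l‖ = 1 := by
    rw [norm_div, Complex.norm_real, norm_norm, div_self (norm_pos_iff.2 hl).ne']
  have hT : ∀ n : ℕ, ∃ T : lp (fun _ : ℕ => 𝔏) 2 →L[ℂ] lp (fun _ : ℕ => 𝔏) 2,
      (∀ x k, (T x) (k + n) = ((‖l‖ : ℂ) / l) ^ k • L n (x k)) ∧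
      ∀ x j, j < n → (T x) j = 0 := by
    intro n
    obtain ⟨T, -, h1, h2⟩ := aux_exists_wcomp (𝔏 := 𝔏) (fun k : ℕ => k + n)
      (fun i j h => by simpa using h) (fun k => ((‖l‖ : ℂ) / l) ^ k • L n) ‖L n‖ (norm_nonneg _)
      (by
        intro k x
        rw [smul_apply, norm_smul, norm_pow, hω1, one_pow, one_mul]
        exact (L n).le_opNorm x)
    exact ⟨T, h1, fun x j hj => h2 x j (by rintro ⟨k, hk⟩; omega)⟩
  choose T hT1 hT2 using hT
  have hTs : ∀ n j a i, (T n (lp.single 2 j a)) i =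
      if i = j + n then (X (lp.single 2 j a)) i else 0 := by
    intro n j a i
    by_cases hi : i < n
    · rw [hT2 _ _ _ hi]
      split_ifs with h
      · omega
      · rfl
    · obtain ⟨k, rfl⟩ := Nat.exists_eq_add_of_le' (not_lt.1 hi)
      rw [hT1, lp.single_apply]
      by_cases hkj : k = j
      · subst hkj
        rw [if_pos rfl, hXL, if_neg (by omega), Pi.single_eq_same, Nat.add_sub_cancel_left]
      · rw [if_neg (by omega), Pi.single_eq_of_ne hkj, map_zero, smul_zero]
  let S : ℕ → lp (fun _ : ℕ => 𝔏) 2 →L[ℂ] lp (fun _ : ℕ => 𝔏) 2 := fun M =>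
    ∑ n ∈ Finset.range (M + 1), (((M + 1 - n : ℕ) : ℂ) / ((M + 1 : ℕ) : ℂ)) • T n
  have hSs : ∀ M j a i, (S M (lp.single 2 j a)) i =
      (((M + 1 - (i - j) : ℕ) : ℂ) / ((M + 1 : ℕ) : ℂ)) • (X (lp.single 2 j a)) i := by
    intro M j a i
    have h1 : (S M (lp.single 2 j a)) i = ∑ n ∈ Finset.range (M + 1),
        (((M + 1 - n : ℕ) : ℂ) / ((M + 1 : ℕ) : ℂ)) • (T n (lp.single 2 j a)) i := by
      change (S M (lp.single 2 j a) : ℕ → 𝔏) i = _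
      simp only [S, ContinuousLinearMap.sum_apply, lp.coeFn_sum, Finset.sum_apply, smul_apply,
        lp.coeFn_smul, Pi.smul_apply]
    rw [h1]
    by_cases hij : i < j
    · rw [hXL, if_pos hij, smul_zero]
      refine Finset.sum_eq_zero fun n _ => ?_
      rw [hTs, if_neg (by omega), smul_zero]
    · rw [Finset.sum_eq_single (i - j)]
      · rw [hTs, if_pos (by omega)]
      · intro n _ hn
        rw [hTs, if_neg (by omega), smul_zero]
      · intro hn
        simp only [Finset.mem_range, not_lt] at hn
        rw [Nat.sub_eq_zero_of_le hn]
        simp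
  have hSn : ∀ M, ‖S M‖ ≤ ‖X‖ := by
    intro M
    refine aux_fejer (S M) X (M + 1) (Nat.succ_pos M) ?_ ?_
    · intro j a i hij
      rw [hXL, if_pos hij]
    · intro j a i
      have : ((M + 1 : ℕ) : ℂ) ≠ 0 := by exact_mod_cast Nat.succ_ne_zero M
      rw [hSs, smul_smul, mul_div_cancel₀ _ this]
  have hlim : ∀ j a i, Tendsto (fun M => (S M (lp.single 2 j a)) i) atTop
      (𝓝 ((X (lp.single 2 j a)) i)) := by
    intro j a i
    have hc : Tendsto (fun M : ℕ => (((M + 1 - (i - j) : ℕ) : ℂ) / ((M + 1 : ℕ) : ℂ))) atTop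
        (𝓝 1) := by
      have h1 : Tendsto (fun M : ℕ => (1 : ℂ) - ((i - j : ℕ) : ℂ) / ((M + 1 : ℕ) : ℂ)) atTop
          (𝓝 (1 - 0)) := by
        refine tendsto_const_nhds.sub ?_
        exact (tendsto_add_atTop_iff_nat 1).2
          (tendsto_const_div_atTop_nhds_zero_nat ((i - j : ℕ) : ℂ))
      rw [sub_zero] at h1
      refine h1.congr' ?_
      filter_upwards [eventually_ge_atTop (i - j)] with M hM
      have : ((M + 1 : ℕ) : ℂ) ≠ 0 := by exact_mod_cast Nat.succ_ne_zero M
      rw [Nat.cast_sub (show i - j ≤ M + 1 by omega), sub_div, div_self this]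
    have := hc.smul_const ((X (lp.single 2 j a)) i)
    rw [one_smul] at this
    exact this.congr (fun M => (hSs M j a i).symm)
  refine mem_closure_of_tendsto (b := atTop) (f := fun M => (ContinuousLinearMapWOT.linearEquiv
      (σ := RingHom.id ℂ) (E := lp (fun _ : ℕ => 𝔏) 2) (F := lp (fun _ : ℕ => 𝔏) 2) ℂ).symm (S M))
      ?_ (Eventually.of_forall fun M => ?_)
  · rw [ContinuousLinearMapWOT.tendsto_iff_forall_dual_apply_tendsto]
    intro x y
    have := aux_weak S X ‖X‖ hSn hlim x ((InnerProductSpace.toDual ℂ _).symm y)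
    simp only [InnerProductSpace.toDual_symm_apply] at this
    exact this
  · refine ⟨S M, ?_, rfl⟩
    refine Submodule.sum_mem _ fun n _ => Submodule.smul_mem _ _ (Submodule.subset_span ?_)
    refine ⟨n, L n, hL n, fun x => ⟨fun j hj => hT2 n x j hj, fun k => ?_⟩⟩
    rw [hT1, aux_conj_pow A B (L n) hAB l (hL n)]

theorem aux_closure_form
    {𝔏 : Type*} [NormedAddCommGroup 𝔏] [InnerProductSpace ℂ 𝔏] [CompleteSpace 𝔏]
    (A : 𝔏 →L[ℂ] 𝔏) (hApos : A.IsPositive) (B : 𝔏 →L[ℂ] 𝔏) (hAB : A ∘L B = 1) (l : ℂ)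
    (X : lp (fun _ : ℕ => 𝔏) 2 →L[ℂ] lp (fun _ : ℕ => 𝔏) 2)
    (hX : X ∈ ⇑(ContinuousLinearMapWOT.linearEquiv (σ := RingHom.id ℂ)
          (E := lp (fun _ : ℕ => 𝔏) 2) (F := lp (fun _ : ℕ => 𝔏) 2) ℂ).symm ⁻¹'
        closure (⇑(ContinuousLinearMapWOT.linearEquiv (σ := RingHom.id ℂ)
          (E := lp (fun _ : ℕ => 𝔏) 2) (F := lp (fun _ : ℕ => 𝔏) 2) ℂ).symm ''
          (Submodule.span ℂ
            {X0 : lp (fun _ : ℕ => 𝔏) 2 →L[ℂ] lp (fun _ : ℕ => 𝔏) 2 |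
              ∃ (n : ℕ) (L : 𝔏 →L[ℂ] 𝔏), A ∘L L = (‖l‖ : ℂ) • (L ∘L A) ∧
                ∀ x : lp (fun _ : ℕ => 𝔏) 2,
                  (∀ j : ℕ, j < n → (X0 x) j = 0) ∧
                  ∀ k : ℕ, (X0 x) (k + n) =
                    l ^ (-(k : ℤ)) • (A ^ k) (L ((B ^ k) (x k)))} : Set _))) :
    AuxForm A l X := by
  have hAs : ∀ x y, inner ℂ (A x) y = inner ℂ x (A y) := hApos.isSymmetric
  set ω : ℂ := (‖l‖ : ℂ) / l with hω
  -- closedness principle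
  have principle : ∀ (x₁ x₂ y₁ y₂ : lp (fun _ : ℕ => 𝔏) 2) (c : ℂ),
      (∀ (n : ℕ) (L : 𝔏 →L[ℂ] 𝔏) (X0 : lp (fun _ : ℕ => 𝔏) 2 →L[ℂ] lp (fun _ : ℕ => 𝔏) 2),
        A ∘L L = (‖l‖ : ℂ) • (L ∘L A) → (∀ j a i, (X0 (lp.single 2 j a)) i =
          if i = j + n then ω ^ j • L a else 0) →
        inner ℂ y₁ (X0 x₁) = c * inner ℂ y₂ (X0 x₂)) →
      inner ℂ y₁ (X x₁) = c * inner ℂ y₂ (X x₂) := by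
    intro x₁ x₂ y₁ y₂ c h
    let Z : Set (lp (fun _ : ℕ => 𝔏) 2 →WOT[ℂ] lp (fun _ : ℕ => 𝔏) 2) :=
      {T | innerSL ℂ y₁ (T x₁) = c * innerSL ℂ y₂ (T x₂)}
    have hZ : IsClosed Z := isClosed_eq
      (ContinuousLinearMapWOT.continuous_dual_apply x₁ (innerSL ℂ y₁))
      (continuous_const.mul (ContinuousLinearMapWOT.continuous_dual_apply x₂ (innerSL ℂ y₂)))
    refine closure_minimal ?_ hZ hX
    rintro _ ⟨T, hT, rfl⟩
    change inner ℂ y₁ (T x₁) = c * inner ℂ y₂ (T x₂)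
    induction hT using Submodule.span_induction with
    | mem T hT =>
      obtain ⟨n, L, hL, hT⟩ := hT
      refine h n L T hL ?_
      intro j a i
      obtain ⟨h0, h1⟩ := hT (lp.single 2 j a)
      by_cases hi : i < n
      · rw [h0 i hi, if_neg (by omega)]
      · obtain ⟨k, rfl⟩ := Nat.exists_eq_add_of_le' (not_lt.1 hi)
        rw [h1, aux_conj_pow A B L hAB l hL, lp.single_apply]
        by_cases hkj : k = j
        · subst hkj
          rw [if_pos rfl, Pi.single_eq_same]
        · rw [if_neg (by omega), Pi.single_eq_of_ne hkj, map_zero, smul_zero]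
    | zero => simp
    | add S T _ _ hS hT => rw [add_apply, add_apply, inner_add_right, inner_add_right, hS, hT,
        mul_add]
    | smul d T _ hT => rw [smul_apply, smul_apply, inner_smul_right, inner_smul_right, hT]; ring
  have hpt : ∀ (u v : 𝔏), (∀ b, inner ℂ b u = inner ℂ b v) → u = v := fun u v h =>
    ext_inner_left ℂ h
  have hsl : ∀ (i : ℕ) (b : 𝔏) (f : lp (fun _ : ℕ => 𝔏) 2),
      inner ℂ (lp.single 2 i b) f = inner ℂ b (f i) := fun i b f => lp.inner_single_left i b f
  have ha : ∀ j a i, i < j → (X (lp.single 2 j a)) i = 0 := by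
    intro j a i hij
    apply hpt
    intro b
    have := principle (lp.single 2 j a) 0 (lp.single 2 i b) 0 0 (by
      intro n L X0 hL h0
      rw [hsl, h0, if_neg (by omega)]
      simp)
    rw [hsl] at this
    rw [this]
    simp
  have hb : ∀ j a i, (X (lp.single 2 (j + 1) a)) (i + 1) = ω • (X (lp.single 2 j a)) i := by
    intro j a i
    apply hpt
    intro b
    have := principle (lp.single 2 (j + 1) a) (lp.single 2 j a) (lp.single 2 (i + 1) b)
      (lp.single 2 i b) ω (by
      intro n L X0 hL h0
      rw [hsl, hsl, h0, h0]
      by_cases h : i = j + n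
      · rw [if_pos (by omega), if_pos h, inner_smul_right, inner_smul_right, pow_succ]
        ring
      · rw [if_neg (by omega), if_neg h]
        simp)
    rw [hsl, hsl] at this
    rw [this, inner_smul_right]
  have hc : ∀ a i, A ((X (lp.single 2 0 a)) i) = (‖l‖ : ℂ) • (X (lp.single 2 0 (A a))) i := by
    intro a i
    apply hpt
    intro b
    have := principle (lp.single 2 0 a) (lp.single 2 0 (A a)) (lp.single 2 i (A b))
      (lp.single 2 i b) (‖l‖ : ℂ) (by
      intro n L X0 hL h0
      rw [hsl, hsl, h0, h0]
      have hL' : A (L a) = (‖l‖ : ℂ) • L (A a) := DFunLike.congr_fun hL a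
      by_cases h : i = 0 + n
      · rw [if_pos h, if_pos h, pow_zero, one_smul, one_smul, hAs, hL', inner_smul_right]
      · rw [if_neg h, if_neg h]
        simp)
    rw [hsl, hsl] at this
    rw [inner_smul_right, ← this, hAs]
  refine ⟨fun n => lp.evalCLM ℂ (fun _ : ℕ => 𝔏) 2 n ∘L X ∘L
      lp.singleContinuousLinearMap ℂ (fun _ : ℕ => 𝔏) 2 0, ?_, ?_⟩
  · intro n
    ext a
    exact hc a n
  · intro j
    induction j with
    | zero =>
      intro a i
      rw [if_neg (by omega), pow_zero, one_smul]
      rfl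
    | succ j ih =>
      intro a i
      cases i with
      | zero => rw [if_pos (by omega), ha _ _ _ (by omega)]
      | succ i =>
        rw [hb, ih]
        by_cases hij : i < j
        · rw [if_pos hij, if_pos (by omega), smul_zero]
        · rw [if_neg hij, if_neg (by omega), smul_smul, ← pow_succ', Nat.add_sub_add_right]

end AuxHelpers

theorem lifting_extended_eigenvector_iff_weakStar_closure
    {𝔏 : Type*} [NormedAddCommGroup 𝔏] [InnerProductSpace ℂ 𝔏] [CompleteSpace 𝔏]
    (A : 𝔏 →L[ℂ] 𝔏) (hApos : A.IsPositive)
    (B : 𝔏 →L[ℂ] 𝔏) (hAB : A ∘L B = 1) (hBA : B ∘L A = 1)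
    (ι : lp (fun _ : ℕ => 𝔏) 2 →ₗᵢ[ℂ] lp (fun _ : ℤ => 𝔏) 2)
    (hι₁ : ∀ (x : lp (fun _ : ℕ => 𝔏) 2) (n : ℕ), (ι x) (n : ℤ) = x n)
    (hι₂ : ∀ (x : lp (fun _ : ℕ => 𝔏) 2) (m : ℤ), m < 0 → (ι x) m = 0)
    (AU : lp (fun _ : ℤ => 𝔏) 2 →L[ℂ] lp (fun _ : ℤ => 𝔏) 2)
    (hAU : ∀ (x : lp (fun _ : ℤ => 𝔏) 2) (n : ℤ), (AU x) n = A (x (n - 1)))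
    (l : ℂ) (hl : l ∈ extSpectrum AU)
    (X : lp (fun _ : ℕ => 𝔏) 2 →L[ℂ] lp (fun _ : ℕ => 𝔏) 2) :
    (∃ Xhat : lp (fun _ : ℤ => 𝔏) 2 →L[ℂ] lp (fun _ : ℤ => 𝔏) 2,
        (∀ v, Xhat (ι v) = ι (X v)) ∧ AU ∘L Xhat = l • (Xhat ∘L AU)) ↔
      X ∈ ⇑(ContinuousLinearMapWOT.linearEquiv (σ := RingHom.id ℂ)
          (E := lp (fun _ : ℕ => 𝔏) 2) (F := lp (fun _ : ℕ => 𝔏) 2) ℂ).symm ⁻¹'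
        closure (⇑(ContinuousLinearMapWOT.linearEquiv (σ := RingHom.id ℂ)
          (E := lp (fun _ : ℕ => 𝔏) 2) (F := lp (fun _ : ℕ => 𝔏) 2) ℂ).symm ''
          (Submodule.span ℂ
            {X0 : lp (fun _ : ℕ => 𝔏) 2 →L[ℂ] lp (fun _ : ℕ => 𝔏) 2 |
              ∃ (n : ℕ) (L : 𝔏 →L[ℂ] 𝔏), A ∘L L = (‖l‖ : ℂ) • (L ∘L A) ∧
                ∀ x : lp (fun _ : ℕ => 𝔏) 2,
                  (∀ j : ℕ, j < n → (X0 x) j = 0) ∧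
                  ∀ k : ℕ, (X0 x) (k + n) =
                    l ^ (-(k : ℤ)) • (A ^ k) (L ((B ^ k) (x k)))} : Set _)) := by
  have hABx : ∀ x, A (B x) = x := fun x => DFunLike.congr_fun hAB x
  have hBAx : ∀ x, B (A x) = x := fun x => DFunLike.congr_fun hBA x
  have hιs : ∀ (j : ℕ) a, ι (lp.single 2 j a) = lp.single 2 (j : ℤ) a := by
    intro j a
    ext i
    by_cases hi : i < 0
    · rw [hι₂ _ _ hi, lp.single_apply, Pi.single_eq_of_ne (by omega)]
    · obtain ⟨p, rfl⟩ := Int.eq_ofNat_of_zero_le (not_lt.1 hi)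
      rw [hι₁, lp.single_apply, lp.single_apply]
      by_cases h : p = j
      · subst h
        rw [Pi.single_eq_same, Pi.single_eq_same]
      · rw [Pi.single_eq_of_ne h, Pi.single_eq_of_ne (by omega)]
  have hAUs : ∀ (j : ℤ) a, AU (lp.single 2 j a) = lp.single 2 (j + 1) (A a) := by
    intro j a
    ext i
    rw [hAU, lp.single_apply, lp.single_apply]
    by_cases h : i = j + 1
    · subst h
      rw [add_sub_cancel_right, Pi.single_eq_same, Pi.single_eq_same]
    · rw [Pi.single_eq_of_ne h, Pi.single_eq_of_ne (by omega), map_zero]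
  have hl0 : l ≠ 0 := by
    rintro rfl
    obtain ⟨Y, hY0, hY⟩ := hl
    apply hY0
    ext x n
    have h1 := congrArg (fun z : lp (fun _ : ℤ => 𝔏) 2 => z (n + 1)) (DFunLike.congr_fun hY x)
    simp only [zero_smul, ContinuousLinearMap.comp_apply, hAU, add_sub_cancel_right] at h1
    have h2 := congrArg B h1
    rw [hBAx] at h2
    rw [h2]
    exact map_zero B
  constructor
  · rintro ⟨Xhat, h1, h2⟩
    exact aux_form_closure A B hAB l hl0 X
      (aux_lift_form A hApos B hAB ι hι₁ hι₂ AU hAU l hl0 hιs hAUs X Xhat h1 h2)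
  · intro h
    exact aux_form_lift A ι hι₁ hι₂ AU hAU l hl0 hιs hAUs X
      (aux_closure_form A hApos B hAB l X h)
end
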